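/- Let p be an odd prime, let n ≥ p be an integer, and let k be an algebraically closed field of characteristic p. Then there exists a finite Galois field extension L of the rational function field k(X) whose Galois group is isomorphic to the alternating group A_n, such that every nonzero prime ideal of the polynomial ring k[X] is unramified in L; that is, for every nonzero prime ideal P of k[X] and every prime ideal Q of the integral closure B of k[X] in L lying over P, the ramification index of Q over P equals 1. -/

import Mathlib

open Polynomial

/-!
Let `x = h(y) / g(y)` be an indecomposable rational function of degree `n` with a pole at infinity,
all of whose finite critical points that are not poles lie over `x = 0`, with ramification indices
dividing an even number `e` prime to `p`. By Abhyankar's lemma the Galois closure `L` of `k(z, y)`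
over `k(z)`, where `z ^ e = x`, is unramified over the affine line with coordinate `z`. The Galois
group of `L` over `k(x)` acts primitively on the fiber, since `h / g` is indecomposable; if it
contains a transposition coming from the inertia at `x = 0`, it acts as the full symmetric group.
Then the Galois group over `k(z)` acts through the alternating group: it contains the commutators,
because `z ↦ ζ z` are commuting automorphisms, and it consists of even permutations, because the
discriminant of the fiber is a constant times an even power of `z`.

Suitable `h / g` exist for every `n ≥ p` because ramification at infinity may be wild: adding to `h`
a multiple `g s` with `s' = 0` changes the degree but not the Wronskian `g h' - g' h`, and so not
the finite critical points.
-/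

/-! ### Permutation groups -/

theorem alternatingGroup_le_commutator (α : Type*) [Fintype α] [DecidableEq α] :
    alternatingGroup α ≤ commutator (Equiv.Perm α) := by
  rw [← Equiv.Perm.closure_three_cycles_eq_alternating, commutator_eq_closure]
  refine Subgroup.closure_mono fun c hc ↦ mem_commutatorSet_of_isConj_sq _ ?_
  rw [Equiv.Perm.isConj_iff_cycleType_eq, sq, Equiv.Perm.IsThreeCycle.cycleType hc,
    (Equiv.Perm.IsThreeCycle.isThreeCycle_sq hc).cycleType]

section
variable {G α : Type*} [Group G] [MulAction G α]

theorem natCard_le_orderOf_of_commute [Finite G] [FaithfulSMul G α]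
    [MulAction.IsQuasiPreprimitive G α] {g : G} (hg : g ≠ 1) (hcomm : ∀ x, Commute x g)
    [Nonempty α] : Nat.card α ≤ orderOf g := by
  have : (Subgroup.zpowers g).Normal := by
    refine ⟨fun a ha b ↦ ?_⟩
    obtain ⟨m, rfl⟩ := Subgroup.mem_zpowers_iff.mp ha
    rwa [((hcomm b).zpow_right m).eq, mul_inv_cancel_right]
  have : MulAction.IsPretransitive (Subgroup.zpowers g) α := by
    refine MulAction.IsQuasiPreprimitive.isPretransitive_of_normal fun hfix ↦ hg ?_
    refine FaithfulSMul.eq_of_smul_eq_smul (α := α) fun a ↦ ?_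
    have ha : a ∈ MulAction.fixedPoints (Subgroup.zpowers g) α := hfix ▸ Set.mem_univ a
    simpa using! ha ⟨g, Subgroup.mem_zpowers g⟩
  rw [← Nat.card_zpowers]
  exact Nat.card_le_card_of_surjective _
    (MulAction.surjective_smul (Subgroup.zpowers g) (Classical.arbitrary α))

/-- The permutation representation of `G` on an index type whose image under the injection `r` is
stable under `G`. -/
noncomputable def permHom {ι : Type*} {r : ι → α} (hr : Function.Injective r)
    (hG : ∀ (g : G) (i : ι), ∃ j, r j = g • r i) : G →* Equiv.Perm ι :=
  MonoidHom.toHomPerm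
    { toFun := fun g i ↦ (hG g i).choose
      map_one' := funext fun i ↦ hr <| (hG 1 i).choose_spec.trans (one_smul G _)
      map_mul' := fun g g' ↦ funext fun i ↦ hr <| by
        rw [(hG _ _).choose_spec, mul_smul, ← (hG g' i).choose_spec]
        exact (hG g _).choose_spec.symm }

theorem permHom_spec {ι : Type*} {r : ι → α} (hr : Function.Injective r)
    (hG : ∀ (g : G) (i : ι), ∃ j, r j = g • r i) (g : G) (i : ι) :
    r (permHom hr hG g i) = g • r i :=
  (hG g i).choose_spec

end

/- Such an `s` is a four-cycle, and `g` lies outside the dihedral group centralizing `s ^ 2`. -/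
theorem exists_card_support_eq_two_of_not_commute_sq :
    ∀ s g : Equiv.Perm (Fin 4), (∀ i, s (s i) ≠ i) → ¬ Commute g (s ^ 2) →
      ∃ i j : Fin 4, (s ^ (i : ℕ) * g * s ^ (j : ℕ)).support.card = 2 := by
  unfold Commute SemiconjBy
  decide +kernel

theorem subgroup_perm_fin_four_eq_top {G : Subgroup (Equiv.Perm (Fin 4))}
    (hG : MulAction.IsPreprimitive G (Fin 4)) {s : Equiv.Perm (Fin 4)} (hs : s ∈ G)
    (hsq : ∀ i, s (s i) ≠ i) : G = ⊤ := by
  obtain ⟨g, hg⟩ : ∃ g : G, ¬ Commute (g : Equiv.Perm (Fin 4)) (s ^ 2) := by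
    by_contra! hcomm
    have hs2 : (⟨s ^ 2, pow_mem hs 2⟩ : G) ≠ 1 := fun h ↦ hsq 0 <| by
      simpa [sq] using congr((($h : G) : Equiv.Perm (Fin 4)) 0)
    have hs4 : ∀ s : Equiv.Perm (Fin 4), (∀ i, s (s i) ≠ i) → (s ^ 2) ^ 2 = 1 := by decide +kernel
    have hcard := natCard_le_orderOf_of_commute (α := Fin 4) hs2 fun x ↦ Subtype.ext (hcomm x)
    have hord := orderOf_le_of_pow_eq_one two_pos (Subtype.ext (hs4 s hsq) :
      (⟨s ^ 2, pow_mem hs 2⟩ : G) ^ 2 = 1)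
    rw [Nat.card_fin] at hcard
    omega
  obtain ⟨i, j, hij⟩ := exists_card_support_eq_two_of_not_commute_sq s g hsq hg
  exact Equiv.Perm.subgroup_eq_top_of_isPreprimitive_of_isSwap_mem hG _
    (Equiv.Perm.card_support_eq_two.mp hij) (mul_mem (mul_mem (pow_mem hs _) g.2) (pow_mem hs _))

/-! ### Places -/

section Places

theorem exists_algHom_ker_eq {k B : Type*} [Field k] [IsAlgClosed k] [CommRing B] [Algebra k B]
    [Algebra.FiniteType k B] (Q : Ideal B) [Q.IsMaximal] :
    ∃ ρ : B →ₐ[k] k, RingHom.ker ρ = Q := by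
  let _ := Ideal.Quotient.field Q
  have : Module.Finite k (B ⧸ Q) := finite_of_finite_type_of_isJacobsonRing k (B ⧸ Q)
  let e : k ≃ₐ[k] B ⧸ Q := AlgEquiv.ofBijective (Algebra.ofId k (B ⧸ Q))
    IsAlgClosed.algebraMap_bijective_of_isIntegral
  refine ⟨(e.symm : B ⧸ Q →ₐ[k] k).comp (Ideal.Quotient.mkₐ k Q), ?_⟩
  ext b
  simp [RingHom.mem_ker, Ideal.Quotient.eq_zero_iff_mem]

theorem exists_algHom_algebraMap_X_eq {k B : Type*} [Field k] [IsAlgClosed k] [CommRing B]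
    [Algebra k B] [Algebra k[X] B] [IsScalarTower k k[X] B] [Module.Finite k[X] B]
    [FaithfulSMul k[X] B] (c : k) : ∃ ρ : B →ₐ[k] k, ρ (algebraMap k[X] B X) = c := by
  have : Algebra.FiniteType k B := .trans (S := k[X]) inferInstance inferInstance
  have : (Ideal.span {X - C c} : Ideal k[X]).IsMaximal :=
    PrincipalIdealRing.isMaximal_of_irreducible (irreducible_X_sub_C c)
  obtain ⟨Q, hQ, hQc⟩ :=
    Ideal.exists_maximal_ideal_liesOver_of_isIntegral (S := B) (Ideal.span {X - C c} : Ideal k[X])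
  obtain ⟨ρ, hρ⟩ := exists_algHom_ker_eq (k := k) Q
  have hX : X - C c ∈ Q.under k[X] := hQc.over ▸ Ideal.mem_span_singleton_self _
  rw [Ideal.mem_comap, ← hρ, RingHom.mem_ker, map_sub, map_sub, ← algebraMap_eq,
    ← IsScalarTower.algebraMap_apply, AlgHom.commutes, sub_eq_zero] at hX
  exact ⟨ρ, hX⟩

theorem exists_algHom_smul_eq {k R B : Type*} (G : Type*) [Field k] [CommRing R] [CommRing B]
    [Algebra k R] [Algebra k B] [Algebra R B] [IsScalarTower k R B] [Group G] [Finite G]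
    [MulSemiringAction G B] [Algebra.IsInvariant R B G] [SMulCommClass G R B] {ρ ρ' : B →ₐ[k] k}
    (h : ∀ x : R, ρ (algebraMap R B x) = ρ' (algebraMap R B x)) :
    ∃ η : G, ∀ b, ρ' (η • b) = ρ b := by
  have : (RingHom.ker ρ).IsPrime := RingHom.ker_isPrime (ρ : B →+* k)
  have : (RingHom.ker ρ').IsPrime := RingHom.ker_isPrime (ρ' : B →+* k)
  obtain ⟨η, hη⟩ := Algebra.IsInvariant.exists_smul_of_under_eq R B G
    (RingHom.ker ρ) (RingHom.ker ρ') (by ext x; simp [Ideal.under, RingHom.mem_ker, h])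
  refine ⟨η, fun b ↦ ?_⟩
  have hb : b - algebraMap k B (ρ b) ∈ RingHom.ker ρ := by simp [RingHom.mem_ker]
  have hηb := Ideal.smul_mem_pointwise_smul η _ _ hb
  rwa [← hη, smul_sub, RingHom.mem_ker, IsScalarTower.algebraMap_apply k R B, smul_algebraMap,
    ← IsScalarTower.algebraMap_apply, map_sub, AlgHom.commutes, sub_eq_zero] at hηb

theorem ramificationIdx'_eq_one_of_inertia_eq_bot {R B : Type*} (G : Type*) [CommRing R]
    [IsDedekindDomain R] [CommRing B] [IsDedekindDomain B] [Algebra R B] [Module.Finite R B]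
    [Module.IsTorsionFree R B] [Group G] [Finite G] [MulSemiringAction G B] [IsGaloisGroup G R B]
    {P : Ideal R} [P.IsPrime] (hP : P ≠ ⊥) [PerfectField P.ResidueField] (Q : Ideal B) [Q.IsPrime]
    [Q.LiesOver P] (hQ : Q.inertia G = ⊥) : P.ramificationIdx' Q = 1 := by
  rw [Ideal.ramificationIdx'_eq_ramificationIdx P Q hP,
    ← Ideal.ramificationIdxIn_eq_ramificationIdx P Q G,
    ← Ideal.card_inertia_eq_ramificationIdxIn (G := G) P Q, hQ, Subgroup.card_bot]

theorem perfectField_residueField {k R : Type*} [Field k] [PerfectField k] [CommRing R]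
    [Algebra k R] [Algebra.FiniteType k R] (P : Ideal R) [P.IsMaximal] :
    PerfectField P.ResidueField := by
  let _ := Ideal.Quotient.field P
  have : Module.Finite k (R ⧸ P) := finite_of_finite_type_of_isJacobsonRing k (R ⧸ P)
  have : Module.Finite k P.ResidueField := .of_surjective
    (IsScalarTower.toAlgHom k (R ⧸ P) P.ResidueField).toLinearMap
    (Ideal.bijective_algebraMap_quotient_residueField P).surjective
  exact Algebra.IsAlgebraic.perfectField k

theorem ramificationIdx'_integralClosure_eq_one {R K L : Type*} [CommRing R] [IsDedekindDomain R]
    [Field K] [Algebra R K] [IsFractionRing R K] [Field L] [Algebra K L] [Algebra R L]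
    [IsScalarTower R K L] [FiniteDimensional K L] [IsGalois K L] {P : Ideal R} [P.IsPrime]
    (hP : P ≠ ⊥) [PerfectField P.ResidueField] {Q : Ideal (integralClosure R L)} [Q.IsPrime]
    (hQP : Q.comap (algebraMap R (integralClosure R L)) = P)
    (hQ : ∀ σ : Gal(L/K), (∀ b : integralClosure R L, σ • b - b ∈ Q) → σ = 1) :
    P.ramificationIdx' Q = 1 := by
  have : IsDedekindDomain (integralClosure R L) := integralClosure.isDedekindDomain R K L
  have : IsFractionRing (integralClosure R L) L :=
    integralClosure.isFractionRing_of_finite_extension K L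
  have : Module.Finite R (integralClosure R L) := IsIntegralClosure.finite R K L _
  have : IsGaloisGroup Gal(L/K) R (integralClosure R L) := .of_isFractionRing _ _ _ K L
  have : Q.LiesOver P := ⟨hQP.symm⟩
  have : Module.IsTorsionFree R L := .trans_faithfulSMul R K L
  exact ramificationIdx'_eq_one_of_inertia_eq_bot Gal(L/K) hP Q
    ((Subgroup.eq_bot_iff_forall _).mpr hQ)

theorem sub_dvd_aeval_sub {R A : Type*} [CommRing R] [CommRing A] [Algebra R A] (x y : A)
    (f : R[X]) : x - y ∣ aeval x f - aeval y f := by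
  simpa only [eval_map_algebraMap] using sub_dvd_eval_sub x y (f.map (algebraMap R A))

section LocalBranches
variable {k B : Type*} [Field k] [CommRing B] [IsDomain B] [Algebra k B]

theorem exists_mul_pow_eq_of_sub_pow_mul_eq [IsIntegrallyClosed B] {U g : k[X]} {a : k} {m q : ℕ}
    (hm : m ≠ 0) {z r : B} (hz : z ≠ 0)
    (hr : (r - algebraMap k B a) ^ m * aeval r U = z ^ (m * q) * aeval r g) :
    ∃ w, w * z ^ q = aeval r U * (r - algebraMap k B a) ∧
      w ^ m = aeval r U ^ (m - 1) * aeval r g := by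
  obtain ⟨m, rfl⟩ := Nat.exists_eq_add_one_of_ne_zero hm
  have hpow : (aeval r U * (r - algebraMap k B a)) ^ (m + 1) =
      (z ^ q) ^ (m + 1) * (aeval r U ^ m * aeval r g) := by
    rw [mul_pow, ← pow_mul, mul_comm q]
    linear_combination aeval r U ^ m * hr
  obtain ⟨w, hw⟩ := (IsIntegrallyClosed.pow_dvd_pow_iff hm).mp ⟨_, hpow⟩
  refine ⟨w, by rw [hw, mul_comm], mul_left_cancel₀ (pow_ne_zero (m + 1) (pow_ne_zero q hz)) ?_⟩
  rw [← mul_pow, ← hw, hpow, Nat.add_sub_cancel]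

/- Near a point `a` of multiplicity `m` the function `w = U(r) (r - a) / z ^ q` satisfies
`w ^ m = U(r) ^ (m - 1) g(r)`, so by tameness it is determined by its value at the place, and it
determines `r`. -/
theorem eq_of_algHom_eq (ρ : B →ₐ[k] k) {U g : k[X]} {a : k} {m q : ℕ} (hm : (m : k) ≠ 0)
    (hq : q ≠ 0) (hU : U.eval a ≠ 0) {z r r' w w' : B} (hz : ρ z = 0) (hr : ρ r = a)
    (hr' : ρ r' = a) (hw : w * z ^ q = aeval r U * (r - algebraMap k B a))
    (hw' : w' * z ^ q = aeval r' U * (r' - algebraMap k B a))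
    (hwm : w ^ m = aeval r U ^ (m - 1) * aeval r g)
    (hwm' : w' ^ m = aeval r' U ^ (m - 1) * aeval r' g) (hρw : ρ w ≠ 0) (hww' : ρ w = ρ w') :
    r = r' := by
  obtain ⟨φ, hφ⟩ := sub_dvd_aeval_sub r r' U
  obtain ⟨χ, hχ⟩ := sub_dvd_aeval_sub r r' (U ^ (m - 1) * g)
  simp only [map_mul, map_pow] at hχ
  set ψ := aeval r U + φ * (r' - algebraMap k B a) with ψ_def
  set S := ∑ i ∈ Finset.range m, w ^ i * w' ^ (m - 1 - i)
  have hS : S * (w - w') = (r - r') * χ := by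
    rw [(Commute.all w w').geom_sum₂_mul, hwm, hwm', hχ]
  have hzw : (w - w') * z ^ q = (r - r') * ψ := by
    linear_combination hw - hw' + (r' - algebraMap k B a) * hφ
  have hprod : (r - r') * (S * ψ - z ^ q * χ) = 0 := by
    linear_combination z ^ q * hS - S * hzw
  refine sub_eq_zero.mp ((mul_eq_zero.mp hprod).resolve_right fun h ↦ ?_)
  have hρS : ρ S = m * ρ w ^ (m - 1) := by
    simp only [S, map_sum, map_mul, map_pow, ← hww']
    exact geom_sum₂_self _ _
  have hρψ : ρ ψ = U.eval a := by
    rw [ψ_def, map_add, map_mul, map_sub, hr', AlgHom.commutes, ← aeval_algHom_apply, hr]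
    simp
  have h0 := congr(ρ $h)
  simp [hz, hq, hρS, hρψ, hm, hρw, hU] at h0

theorem algHom_apply_eq_self_iff_pow_eq_one [IsIntegrallyClosed B] {ρ : B →ₐ[k] k}
    {s : B →ₐ[k] B} (hs : ρ.comp s = ρ) {U g : k[X]} {a : k} {m q : ℕ} (hm : (m : k) ≠ 0)
    (hq : q ≠ 0) (hU : U.eval a ≠ 0) (hg : g.eval a ≠ 0) {z r : B} (hz : z ≠ 0) (hρz : ρ z = 0)
    (hρr : ρ r = a)
    (hr : (r - algebraMap k B a) ^ m * aeval r U = z ^ (m * q) * aeval r g)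
    {ζ : k} (hζ : ζ ^ (m * q) = 1) (hsz : s z = algebraMap k B ζ * z) :
    s r = r ↔ ζ ^ q = 1 := by
  have hm0 : m ≠ 0 := by rintro rfl; simp at hm
  have hρs (b : B) : ρ (s b) = ρ b := DFunLike.congr_fun hs b
  obtain ⟨w, hw, hwm⟩ := exists_mul_pow_eq_of_sub_pow_mul_eq hm0 hz hr
  have hρw : ρ w ≠ 0 := fun h ↦ by
    have := congr(ρ $hwm)
    simp only [map_mul, map_pow, h, ← aeval_algHom_apply, hρr, coe_aeval_eq_eval,
      zero_pow hm0] at this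
    exact mul_ne_zero (pow_ne_zero _ hU) hg this.symm
  have hsw : algebraMap k B (ζ ^ q) * s w * z ^ q =
      aeval (s r) U * (s r - algebraMap k B a) := by
    have := congr(s $hw)
    simp only [map_mul, map_pow, map_sub, hsz, mul_pow, ← aeval_algHom_apply,
      AlgHom.commutes] at this
    rw [← this, map_pow]
    ring
  have hswm : (algebraMap k B (ζ ^ q) * s w) ^ m =
      aeval (s r) U ^ (m - 1) * aeval (s r) g := by
    simp only [mul_pow, ← map_pow, ← pow_mul, mul_comm q m, hζ, map_one, one_mul, hwm, map_mul,
      ← aeval_algHom_apply]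
  constructor
  · intro h
    rw [h, ← hw] at hsw
    have := congr(ρ $(mul_right_cancel₀ (pow_ne_zero q hz) hsw))
    rwa [map_mul, AlgHom.commutes, hρs, mul_eq_right₀ hρw] at this
  · intro h
    rw [h, map_one, one_mul] at hsw hswm
    exact (eq_of_algHom_eq ρ hm hq hU hρz hρr ((hρs r).trans hρr) hw hsw hwm hswm hρw
      (hρs w).symm).symm

end LocalBranches

end Places

/-! ### Fibers of rational functions -/

/-- The family `r` lists, with multiplicity, the points of the fiber over `t` of the rational
function `h / g`, where `h` is monic of degree larger than that of `g`, so that no point of the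
fiber lies at infinity. -/
def IsFiber {k S ι : Type*} [CommRing k] [CommRing S] [Algebra k S] [Fintype ι] (h g : k[X])
    (t : S) (r : ι → S) : Prop :=
  h.map (algebraMap k S) - C t * g.map (algebraMap k S) = ∏ i, (X - C (r i))

namespace IsFiber
variable {k S T ι : Type*} [CommRing k] [CommRing S] [Algebra k S] [CommRing T] [Algebra k T]
  [Fintype ι] {h g : k[X]} {t : S} {r : ι → S}

theorem map (hr : IsFiber h g t r) (f : S →ₐ[k] T) : IsFiber h g (f t) (f ∘ r) := by
  simpa [IsFiber, Polynomial.map_map, Polynomial.map_prod] using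
    congr(Polynomial.map (f : S →+* T) $hr)

theorem of_map {f : S →ₐ[k] T} (hf : Function.Injective f) (hr : IsFiber h g (f t) (f ∘ r)) :
    IsFiber h g t r := by
  refine map_injective (f : S →+* T) hf ?_
  simpa [IsFiber, Polynomial.map_map, Polynomial.map_prod] using hr

theorem eval_eq (hr : IsFiber h g t r) (y : S) :
    aeval y h - t * aeval y g = ∏ i, (y - r i) := by
  simpa [eval_prod] using congr(eval y $hr)

theorem aeval_eq_mul (hr : IsFiber h g t r) (i : ι) : aeval (r i) h = t * aeval (r i) g := by
  rw [← sub_eq_zero, hr.eval_eq]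
  exact Finset.prod_eq_zero (Finset.mem_univ i) (sub_self _)

theorem exists_eq [IsDomain S] (hr : IsFiber h g t r) {y : S} (hy : aeval y h = t * aeval y g) :
    ∃ i, r i = y := by
  have := hr.eval_eq y
  rw [hy, sub_self, eq_comm, Finset.prod_eq_zero_iff] at this
  obtain ⟨i, -, hi⟩ := this
  exact ⟨i, (sub_eq_zero.mp hi).symm⟩

theorem exists_eq_apply [IsDomain S] (hr : IsFiber h g t r) (σ : S →ₐ[k] S) (hσ : σ t = t)
    (i : ι) : ∃ j, r j = σ (r i) := by
  refine hr.exists_eq ?_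
  rw [aeval_algHom_apply, hr.aeval_eq_mul, map_mul, hσ, aeval_algHom_apply]

theorem isIntegral {R : Type*} [CommRing R] [Algebra k R] [Algebra R S] [IsScalarTower k R S]
    [FaithfulSMul R S] {t : R} (hr : IsFiber h g (algebraMap R S t) r) (i : ι) :
    IsIntegral R (r i) := by
  have hmap : (h.map (algebraMap k R) - C t * g.map (algebraMap k R)).map (algebraMap R S) =
      ∏ i, (X - C (r i)) := by
    simpa [IsFiber, Polynomial.map_map, ← IsScalarTower.algebraMap_eq] using hr
  refine ⟨_, monic_of_injective (FaithfulSMul.algebraMap_injective R S)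
    (hmap ▸ monic_prod_X_sub_C r Finset.univ), ?_⟩
  rw [← eval_map, hmap, eval_prod, Finset.prod_eq_zero (Finset.mem_univ i) (by simp)]

theorem injective {k S ι : Type*} [CommRing k] [Field S] [Algebra k S] [Fintype ι] {h g : k[X]}
    {t : S} {r : ι → S} (hr : IsFiber h g t r)
    (hsep : (h.map (algebraMap k S) - C t * g.map (algebraMap k S)).Separable) :
    Function.Injective r :=
  separable_prod_X_sub_C_iff.mp (hr ▸ hsep)

theorem card_filter_eq {k ι : Type*} [CommRing k] [IsDomain k] [DecidableEq k] [Fintype ι]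
    {h g : k[X]} {r : ι → k} (hr : IsFiber h g 0 r) (a : k) :
    (Finset.univ.filter fun i ↦ r i = a).card = h.rootMultiplicity a := by
  have hh : h = ∏ i, (X - C (r i)) := by simpa [IsFiber] using hr
  rw [hh, ← count_roots, roots_prod _ _ (Finset.prod_ne_zero_iff.mpr fun i _ ↦ X_sub_C_ne_zero _)]
  simp only [roots_X_sub_C, Multiset.bind_singleton, Multiset.count_map, eq_comm (a := a)]
  rfl

end IsFiber

theorem aeval_eq_zero_of_forall_isRoot {k S : Type*} [Field k] [IsAlgClosed k] [CommRing S]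
    [IsDomain S] [Algebra k S] {p q : k[X]} (hpq : ∀ b, p.IsRoot b → q.IsRoot b) {y : S}
    (hy : aeval y p = 0) : aeval y q = 0 := by
  rcases eq_or_ne p 0 with rfl | hp
  · rw [show q = 0 from Polynomial.funext fun b ↦ by simpa using hpq b (by simp), map_zero]
  · obtain ⟨b, rfl⟩ := (IsAlgClosed.splits p).mem_range_of_isRoot hp
      (i := algebraMap k S) (x := y) (by rwa [IsRoot, eval_map_algebraMap])
    have hb : p.IsRoot b := by simpa [aeval_algebraMap_apply] using hy
    simpa [aeval_algebraMap_apply] using hpq b hb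

theorem monic_sub_C_mul {S : Type*} [CommRing S] {h g : S[X]} (hm : h.Monic)
    (hd : g.degree < h.degree) (t : S) : (h - C t * g).Monic :=
  hm.sub_of_left (smul_eq_C_mul (p := g) t ▸ (degree_smul_le t g).trans_lt hd)

/-- The rational function `h / g` maps `∞` to `∞`, its finite critical points that are not poles
lie over `0`, and the ramification indices of the points over `0` divide `e`, which is prime to
the characteristic. Then pulling back along `x = z ^ e` removes all the affine ramification. -/
structure IsTameCover {k : Type*} [Field k] (h g : k[X]) (e : ℕ) : Prop where
  monic : h.Monic
  isCoprime : IsCoprime h g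
  degree_lt : g.degree < h.degree
  eval_eq_zero_of_isRoot_wronskian : ∀ b, (wronskian g h).IsRoot b → (h * g).eval b = 0
  natCast_ne_zero : (e : k) ≠ 0
  even : Even e
  rootMultiplicity_dvd : ∀ a, h.IsRoot a → h.rootMultiplicity a ∣ e

namespace IsTameCover
variable {k : Type*} [Field k] {h g : k[X]} {e : ℕ}

theorem ne_zero (H : IsTameCover h g e) : e ≠ 0 := by
  rintro rfl
  exact H.natCast_ne_zero Nat.cast_zero

theorem two_ne_zero (H : IsTameCover h g e) : (2 : k) ≠ 0 := fun h2 ↦ by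
  obtain ⟨j, rfl⟩ := H.even
  exact H.natCast_ne_zero (by rw [Nat.cast_add, ← two_mul, h2, zero_mul])

theorem eval_ne_zero (H : IsTameCover h g e) {a : k} (ha : h.eval a = 0) : g.eval a ≠ 0 := by
  obtain ⟨u, v, huv⟩ := H.isCoprime
  intro hg
  simpa [ha, hg] using congr(eval a $huv)

theorem separable_sub_C_mul [IsAlgClosed k] (H : IsTameCover h g e) {S : Type*} [Field S]
    [Algebra k S] {t : S} (ht : t ≠ 0) :
    (h.map (algebraMap k S) - C t * g.map (algebraMap k S)).Separable := by
  rw [separable_def, isCoprime_iff_aeval_ne_zero_of_isAlgClosed S (AlgebraicClosure S)]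
  by_contra! hroot
  obtain ⟨y, h0, h1⟩ := hroot
  simp only [derivative_C_mul, derivative_map, map_sub, map_mul, aeval_C,
    aeval_map_algebraMap, sub_eq_zero] at h0 h1
  have hW : aeval y (wronskian g h) = 0 := by
    simp only [wronskian, map_sub, map_mul]
    linear_combination aeval y g * h1 - aeval y (derivative g) * h0
  have hhg := aeval_eq_zero_of_forall_isRoot H.eval_eq_zero_of_isRoot_wronskian hW
  have hgy : aeval y g = 0 := by
    by_contra hg
    rw [map_mul, h0] at hhg
    simp_all
  obtain ⟨u, v, huv⟩ := H.isCoprime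
  simpa [h0, hgy] using congr(aeval y $huv)

end IsTameCover

/-! ### Galois closures -/

open IntermediateField in
theorem finiteDimensional_isGalois_of_adjoin_eq_top {F L : Type*} [Field F] [Field L]
    [Algebra F L] {S : Set L} [Finite S] (hS : adjoin F S = ⊤)
    (hp : ∀ y ∈ S, ∃ p : F[X], aeval y p = 0 ∧ p.Separable ∧ (p.map (algebraMap F L)).Splits) :
    FiniteDimensional F L ∧ IsGalois F L := by
  have hmin (y) (hy : y ∈ S) : IsIntegral F y ∧ IsSeparable F y ∧
      ((minpoly F y).map (algebraMap F L)).Splits := by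
    obtain ⟨p, hpy, hsep, hsplits⟩ := hp y hy
    exact ⟨isAlgebraic_iff_isIntegral.mp ⟨p, hsep.ne_zero, hpy⟩,
      hsep.of_dvd (minpoly.dvd F y hpy), hsplits.of_dvd (Polynomial.map_ne_zero hsep.ne_zero)
        (Polynomial.map_dvd (algebraMap F L) (minpoly.dvd F y hpy))⟩
  have hfin : FiniteDimensional F (adjoin F S) := finiteDimensional_adjoin fun y hy ↦ (hmin y hy).1
  have hsep : Algebra.IsSeparable F (adjoin F S) :=
    (isSeparable_adjoin_iff_isSeparable F L).mpr fun y hy ↦ (hmin y hy).2.1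
  rw [hS] at hfin hsep
  have : FiniteDimensional F L := topEquiv.toLinearEquiv.finiteDimensional
  have : Algebra.IsSeparable F L := .of_algHom F _ topEquiv.symm.toAlgHom
  have : Normal F L := ⟨fun y ↦ splits_of_mem_adjoin F L
    (fun x hx ↦ ⟨(hmin x hx).1, (hmin x hx).2.2⟩) (hS ▸ mem_top : y ∈ adjoin F S)⟩
  exact ⟨‹_›, ⟨⟩⟩

theorem irreducible_map_sub_C_mul {k F : Type*} [Field k] [Field F] [Algebra k F] {h g : k[X]}
    (hm : h.Monic) (hc : IsCoprime h g) (hd : g.degree < h.degree) (hg : g ≠ 0)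
    (φ : RatFunc k ≃ₐ[k] F) :
    Irreducible (h.map (algebraMap k F) - C (φ RatFunc.X) * g.map (algebraMap k F)) := by
  set Φ : k[X][X] := h.map C - C X * g.map C with Φ_def
  have hΦm : Φ.Monic := monic_sub_C_mul (hm.map C)
    (by simpa only [degree_map_eq_of_injective C_injective] using hd) X
  have hΦ : Φ = Bivariate.swap (C (-g) * X + C h) := by
    simp only [map_add, map_mul, map_neg, Bivariate.swap_C, Bivariate.swap_Y, Φ_def]
    ring
  have hirr : Irreducible Φ := by
    rw [hΦ, MulEquiv.irreducible_iff]
    exact irreducible_C_mul_X_add_C (neg_ne_zero.mpr hg)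
      ((IsCoprime.neg_right_iff _ _).mpr hc).symm.isRelPrime
  have hφ : ((φ : RatFunc k →+* F).comp (algebraMap k[X] (RatFunc k))).comp C =
      algebraMap k F := by
    ext a
    simp [← RatFunc.algebraMap_eq_C]
  have hmap : mapEquiv φ.toRingEquiv (Φ.map (algebraMap k[X] (RatFunc k))) =
      h.map (algebraMap k F) - C (φ RatFunc.X) * g.map (algebraMap k F) := by
    rw [mapEquiv_apply, Φ_def, ← hφ]
    simp [Polynomial.map_map, RingHom.comp_assoc]
  rw [← hmap, MulEquiv.irreducible_iff, ← hΦm.irreducible_iff_irreducible_map_fraction_map]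
  exact hirr

theorem exists_eq_prod_X_sub_C_of_splits {K : Type*} [Field K] {p : K[X]} {n : ℕ}
    (hp : p.Splits) (hm : p.Monic) (hn : p.natDegree = n) :
    ∃ r : Fin n → K, p = ∏ i, (X - C (r i)) := by
  obtain ⟨l, hl⟩ := Quotient.exists_rep p.roots
  have hlen : l.length = n := by
    rw [← hn, hp.natDegree_eq_card_roots, ← hl, Multiset.quot_mk_to_coe, Multiset.coe_card]
  subst hlen
  refine ⟨l.get, ?_⟩
  conv_lhs => rw [hp.eq_prod_roots_of_monic hm, ← hl]
  simp [← Fin.prod_univ_fun_getElem]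

/-- The field `L` is the Galois closure of `k(z, y) / k(x)`, where `x = z ^ e = h(y) / g(y)` for
an indeterminate `z`: it is generated over `k` by `z` and the points `r i` of the fiber of
`h / g` over `x`. -/
structure IsKummerGaloisClosure {k L ι : Type*} [Field k] [Field L] [Algebra k L] [Fintype ι]
    (h g : k[X]) (e : ℕ) (z : L) (r : ι → L) : Prop where
  transcendental : Transcendental k z
  isFiber : IsFiber h g (z ^ e) r
  adjoin_eq_top : IntermediateField.adjoin k (insert z (Set.range r)) = ⊤

theorem adjoin_insert_algebraMap_X_eq_top {k L : Type*} [Field k] [Field L] [Algebra k L]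
    [Algebra (RatFunc k) L] [IsScalarTower k (RatFunc k) L] {S : Set L}
    (hS : IntermediateField.adjoin (RatFunc k) S = ⊤) :
    IntermediateField.adjoin k (insert (algebraMap (RatFunc k) L RatFunc.X) S) = ⊤ := by
  set E := IntermediateField.adjoin k (insert (algebraMap (RatFunc k) L RatFunc.X) S)
  have hSE : insert (algebraMap (RatFunc k) L RatFunc.X) S ⊆ E :=
    IntermediateField.subset_adjoin k _
  have hK : E.comap (IsScalarTower.toAlgHom k (RatFunc k) L) = ⊤ := by
    rw [← top_le_iff, ← RatFunc.adjoin_X, IntermediateField.adjoin_simple_le_iff]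
    exact hSE (Set.mem_insert _ _)
  suffices ∀ y ∈ IntermediateField.adjoin (RatFunc k) S, y ∈ E from
    top_le_iff.mp fun y _ ↦ this y (hS ▸ IntermediateField.mem_top)
  intro y hy
  induction hy using IntermediateField.adjoin_induction with
  | mem x hx => exact hSE (Set.mem_insert_of_mem _ hx)
  | algebraMap x => exact (hK ▸ IntermediateField.mem_top :
      x ∈ E.comap (IsScalarTower.toAlgHom k (RatFunc k) L))
  | add x y _ _ hx hy => exact add_mem hx hy
  | inv x _ hx => exact inv_mem hx
  | mul x y _ _ hx hy => exact mul_mem hx hy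

theorem exists_isKummerGaloisClosure {k L : Type*} [Field k] [Field L] [Algebra k L]
    [Algebra (RatFunc k) L] [IsScalarTower k (RatFunc k) L] {h g : k[X]} (hm : h.Monic)
    (hd : g.degree < h.degree) {n : ℕ} (hn : h.natDegree = n) (e : ℕ)
    [IsSplittingField (RatFunc k) L
      (h.map (algebraMap k (RatFunc k)) - C (RatFunc.X ^ e) * g.map (algebraMap k (RatFunc k)))] :
    ∃ r : Fin n → L,
      IsKummerGaloisClosure h g e (algebraMap (RatFunc k) L RatFunc.X) r := by
  set p := h.map (algebraMap k (RatFunc k)) -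
    C (RatFunc.X ^ e) * g.map (algebraMap k (RatFunc k)) with p_def
  have hp : (p.map (algebraMap (RatFunc k) L)) = h.map (algebraMap k L) -
      C (algebraMap (RatFunc k) L RatFunc.X ^ e) * g.map (algebraMap k L) := by
    simp [p_def, Polynomial.map_map, IsScalarTower.algebraMap_eq k (RatFunc k) L]
  have hd' : (g.map (algebraMap k (RatFunc k))).degree <
      (h.map (algebraMap k (RatFunc k))).degree := by
    simpa only [degree_map] using hd
  have hpd : p.natDegree = h.natDegree := by
    rw [natDegree_eq_of_degree_eq (degree_sub_eq_left_of_degree_lt _), natDegree_map]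
    rwa [degree_C_mul (pow_ne_zero e RatFunc.X_ne_zero)]
  obtain ⟨r, hr⟩ := exists_eq_prod_X_sub_C_of_splits (IsSplittingField.splits L p)
    ((monic_sub_C_mul (hm.map _) hd' _).map _) ((natDegree_map _).trans (hpd.trans hn))
  refine ⟨r, ?_, hp.symm.trans hr, adjoin_insert_algebraMap_X_eq_top ?_⟩
  · exact (transcendental_algebraMap_iff (algebraMap (RatFunc k) L).injective).mpr
      RatFunc.transcendental_X
  · refine top_le_iff.mp ?_
    rw [← (isSplittingField_iff_intermediateField.mp ‹IsSplittingField (RatFunc k) L p›).2]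
    refine IntermediateField.adjoin.mono _ _ _ fun y hy ↦ ?_
    have : ∏ i, (y - r i) = 0 := by
      simpa [hr, eval_prod] using (eval_map_algebraMap p y).trans (aeval_eq_zero_of_mem_rootSet hy)
    obtain ⟨i, -, hi⟩ := Finset.prod_eq_zero_iff.mp this
    exact ⟨i, (sub_eq_zero.mp hi).symm⟩

namespace IsKummerGaloisClosure
variable {k L ι : Type*} [Field k] [Field L] [Algebra k L] [Fintype ι] {h g : k[X]} {e : ℕ}
  {z : L} {r : ι → L}

theorem ne_zero (hL : IsKummerGaloisClosure h g e z r) : z ≠ 0 := fun hz ↦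
  hL.transcendental (hz ▸ isAlgebraic_zero)

theorem finiteDimensional_isGalois [IsAlgClosed k] (hL : IsKummerGaloisClosure h g e z r)
    (H : IsTameCover h g e) {F : Type*} [Field F] [Algebra k F] [Algebra F L]
    [IsScalarTower k F L] {x : F} (hx : algebraMap F L x = z ^ e) :
    FiniteDimensional F L ∧ IsGalois F L := by
  have hx0 : x ≠ 0 := by
    rintro rfl
    exact pow_ne_zero e hL.ne_zero (hx.symm.trans (map_zero _))
  have htop : IntermediateField.adjoin F (insert z (Set.range r)) = ⊤ := by
    rw [← IntermediateField.restrictScalars_eq_top_iff (K := k), ← top_le_iff, ← hL.adjoin_eq_top,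
      IntermediateField.adjoin_le_iff]
    exact IntermediateField.subset_adjoin F _
  refine finiteDimensional_isGalois_of_adjoin_eq_top htop ?_
  rintro y (rfl | ⟨i, rfl⟩)
  · have : NeZero (e : k) := ⟨H.natCast_ne_zero⟩
    obtain ⟨ζ, hζ⟩ := HasEnoughRootsOfUnity.exists_primitiveRoot k e
    have heF : (e : F) ≠ 0 := by
      simpa using (map_ne_zero (algebraMap k F)).mpr H.natCast_ne_zero
    refine ⟨X ^ e - C x, by simp [hx], separable_X_pow_sub_C x heF hx0, ?_⟩
    simpa [hx] using X_pow_sub_C_splits_of_isPrimitiveRoot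
      (hζ.map_of_injective (algebraMap k L).injective) rfl
  · refine ⟨h.map (algebraMap k F) - C x * g.map (algebraMap k F), ?_,
      H.separable_sub_C_mul hx0, ?_⟩
    · simp [hx, hL.isFiber.aeval_eq_mul]
    · have := hL.isFiber
      rw [IsFiber, ← hx] at this
      simp [Polynomial.map_map, ← IsScalarTower.algebraMap_eq, this, Splits.prod, Splits.X_sub_C]

theorem eq_one_of_forall_eq (hL : IsKummerGaloisClosure h g e z r) {F : Type*} [Field F]
    [Algebra k F] [Algebra F L] [IsScalarTower k F L] {σ : L ≃ₐ[F] L} (hz : σ z = z)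
    (hr : ∀ i, σ (r i) = r i) : σ = 1 := by
  have := IntermediateField.algHom_ext_of_eq_adjoin k hL.adjoin_eq_top.symm
    (φ₁ := ((σ : L →ₐ[F] L).restrictScalars k).comp (IntermediateField.val ⊤))
    (φ₂ := IntermediateField.val ⊤) (by
      rintro y (rfl | ⟨i, rfl⟩)
      exacts [hz, hr i])
  ext y
  exact congr($this ⟨y, IntermediateField.mem_top⟩)

end IsKummerGaloisClosure

open IntermediateField in
theorem exists_algEquiv_apply_eq {k L : Type*} [Field k] [Field L] [Algebra k L] {h g : k[X]}
    (hm : h.Monic) (hc : IsCoprime h g) (hd : g.degree < h.degree) {x : L}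
    (hx : Transcendental k x) [Normal k⟮x⟯ L] {y y' : L} (hy : aeval y h = x * aeval y g)
    (hy' : aeval y' h = x * aeval y' g) : ∃ σ : L ≃ₐ[k⟮x⟯] L, σ y = y' := by
  have hg : g ≠ 0 := by
    rintro rfl
    rw [hm.eq_one_of_isUnit (isCoprime_zero_right.mp hc)] at hy
    simp at hy
  set p := h.map (algebraMap k k⟮x⟯) - C (AdjoinSimple.gen k x) * g.map (algebraMap k k⟮x⟯)
  have hpm : p.Monic := monic_sub_C_mul (hm.map _) (by simpa only [degree_map] using hd) _
  have hp : Irreducible p := by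
    have hX : RatFunc.algEquivOfTranscendental x hx RatFunc.X = AdjoinSimple.gen k x :=
      Subtype.ext (RatFunc.algEquivOfTranscendental_X x hx)
    simpa only [hX] using irreducible_map_sub_C_mul hm hc hd hg
      (RatFunc.algEquivOfTranscendental x hx)
  have hroot {w : L} (hw : aeval w h = x * aeval w g) : aeval w p = 0 := by
    simp [p, hw]
  refine minpoly.exists_algEquiv_of_root ⟨p, hp.ne_zero, hroot hy'⟩ ?_
  rw [← minpoly.eq_of_irreducible_of_monic hp (hroot hy') hpm]
  exact hroot hy

/-! ### Ramification and monodromy at the places -/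

namespace IsTameCover

section
variable {k B ι : Type*} [Field k] [CommRing B] [IsDomain B] [Algebra k B] [Fintype ι] {h g : k[X]}
  {e : ℕ} {z : B} {r : ι → B} {ρ : B →ₐ[k] k} {s : B →ₐ[k] B}

theorem apply_eq_self_of_ne_zero [IsAlgClosed k] (H : IsTameCover h g e)
    (hr : IsFiber h g (z ^ e) r) (hs : ρ.comp s = ρ) (hρz : ρ z ≠ 0) (hsz : s z = z) (i : ι) :
    s (r i) = r i := by
  obtain ⟨j, hj⟩ := hr.exists_eq_apply s (by rw [map_pow, hsz]) i
  have hρr := (hr.map ρ).injective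
    (H.separable_sub_C_mul (by rw [map_pow]; exact pow_ne_zero e hρz))
  have hji : ρ (r j) = ρ (r i) := by rw [hj, ← AlgHom.comp_apply, hs]
  rw [← hj, hρr hji]

theorem apply_eq_self_iff [IsIntegrallyClosed B] (H : IsTameCover h g e)
    (hr : IsFiber h g (z ^ e) r) (hs : ρ.comp s = ρ) (hz : z ≠ 0) (hρz : ρ z = 0) {ζ : k}
    (hζ : ζ ^ e = 1) (hsz : s z = algebraMap k B ζ * z) (i : ι) :
    s (r i) = r i ↔ ζ ^ (e / h.rootMultiplicity (ρ (r i))) = 1 := by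
  set a := ρ (r i)
  have ha : h.eval a = 0 := by
    have := (hr.map ρ).aeval_eq_mul i
    simpa [hρz, H.ne_zero] using this
  obtain ⟨U, hU, hUa⟩ := exists_eq_pow_rootMultiplicity_mul_and_not_dvd h H.monic.ne_zero a
  have hdvd := H.rootMultiplicity_dvd a ha
  have hme : h.rootMultiplicity a * (e / h.rootMultiplicity a) = e := Nat.mul_div_cancel' hdvd
  have hm : ((h.rootMultiplicity a : ℕ) : k) ≠ 0 := fun h0 ↦
    H.natCast_ne_zero (by rw [← hme, Nat.cast_mul, h0, zero_mul])
  refine algHom_apply_eq_self_iff_pow_eq_one hs hm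
    (fun h0 ↦ H.ne_zero (by rw [← hme, h0, mul_zero])) (mt dvd_iff_isRoot.mpr hUa)
    (H.eval_ne_zero ha) hz hρz rfl ?_ (by rwa [hme]) hsz
  rw [hme, ← hr.aeval_eq_mul]
  conv_rhs => rw [hU]
  simp

theorem apply_eq_self [IsAlgClosed k] [IsIntegrallyClosed B] (H : IsTameCover h g e)
    (hr : IsFiber h g (z ^ e) r) (hs : ρ.comp s = ρ) (hz : z ≠ 0) (hsz : s z = z) (i : ι) :
    s (r i) = r i := by
  by_cases hρz : ρ z = 0
  · exact (H.apply_eq_self_iff hr hs hz hρz (one_pow e) (by rw [hsz, map_one, one_mul]) i).mpr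
      (one_pow _)
  · exact H.apply_eq_self_of_ne_zero hr hs hρz hsz i

end

end IsTameCover

theorem exists_algHom_integralClosure {k L : Type*} [Field k] [Field L] [Algebra k[X] L]
    [Algebra k L] [IsScalarTower k k[X] L] (σ : L →ₐ[k] L) {ζ : k}
    (hσ : σ (algebraMap k[X] L X) = algebraMap k L ζ * algebraMap k[X] L X) :
    ∃ s : integralClosure k[X] L →ₐ[k] integralClosure k[X] L, ∀ b, (s b : L) = σ b := by
  have hC (a : k) : algebraMap k[X] L (C a) = algebraMap k L a :=
    (IsScalarTower.algebraMap_apply k k[X] L a).symm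
  have hcomp : (algebraMap k[X] L).comp (aeval (R := k) (C ζ * X) : k[X] →ₐ[k] k[X]) =
      (σ : L →+* L).comp (algebraMap k[X] L) := by
    ext <;> simp [hσ, hC]
  have hint (b : integralClosure k[X] L) : IsIntegral k[X] (σ b) :=
    b.2.map_of_comp_eq _ (σ : L →+* L) hcomp
  exact ⟨(σ.comp ((integralClosure k[X] L).val.restrictScalars k)).codRestrict
    ((integralClosure k[X] L).restrictScalars k) hint, fun b ↦ rfl⟩

theorem smulCommClass_of_isScalarTower (G k R B : Type*) [Monoid G] [CommSemiring k] [Semiring R]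
    [Semiring B] [Algebra k R] [Module R B] [Module k B] [IsScalarTower k R B]
    [MulAction G B] [SMulCommClass G R B] : SMulCommClass G k B :=
  ⟨fun σ c b ↦ by rw [← algebraMap_smul R c b, smul_comm, algebraMap_smul]⟩

namespace IsKummerGaloisClosure
variable {k L ι : Type*} [Field k] [Field L] [Algebra k[X] L] [Algebra (RatFunc k) L]
  [IsScalarTower k[X] (RatFunc k) L] [Algebra k L] [IsScalarTower k k[X] L] [Fintype ι]
  {h g : k[X]} {e : ℕ} {r : ι → L}

theorem exists_isFiber_integralClosure
    (hL : IsKummerGaloisClosure h g e (algebraMap k[X] L X) r) :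
    ∃ r' : ι → integralClosure k[X] L, (∀ i, (r' i : L) = r i) ∧
      IsFiber h g (algebraMap k[X] (integralClosure k[X] L) X ^ e) r' := by
  have : FaithfulSMul k[X] L := .trans k[X] (RatFunc k) L
  have hr : IsFiber h g (algebraMap k[X] L (X ^ e)) r :=
    map_pow (algebraMap k[X] L) X e ▸ hL.isFiber
  refine ⟨fun i ↦ ⟨r i, hr.isIntegral i⟩, fun _ ↦ rfl, ?_⟩
  exact .of_map (f := (integralClosure k[X] L).val.restrictScalars k) Subtype.val_injective
    (by simpa [Function.comp_def] using hL.isFiber)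

variable [IsAlgClosed k] [IsScalarTower k (RatFunc k) L]

theorem ramificationIdx'_eq_one [FiniteDimensional (RatFunc k) L] [IsGalois (RatFunc k) L]
    (hL : IsKummerGaloisClosure h g e (algebraMap k[X] L X) r) (H : IsTameCover h g e)
    {P : Ideal k[X]} [P.IsPrime] (hP : P ≠ ⊥) {Q : Ideal (integralClosure k[X] L)} [Q.IsPrime]
    (hQP : Q.comap (algebraMap k[X] (integralClosure k[X] L)) = P) :
    P.ramificationIdx' Q = 1 := by
  have : P.IsMaximal := Ring.DimensionLEOne.maximalOfPrime hP inferInstance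
  have : PerfectField P.ResidueField := perfectField_residueField (k := k) P
  refine ramificationIdx'_integralClosure_eq_one (K := RatFunc k) hP hQP fun σ hσ ↦ ?_
  have : Module.Finite k[X] (integralClosure k[X] L) :=
    IsIntegralClosure.finite k[X] (RatFunc k) L _
  have : Algebra.FiniteType k (integralClosure k[X] L) :=
    .trans (S := k[X]) inferInstance inferInstance
  have : (Q.comap (algebraMap k[X] (integralClosure k[X] L))).IsMaximal := by rwa [hQP]
  have : Q.IsMaximal := Ideal.isMaximal_of_isIntegral_of_isMaximal_comap (R := k[X]) Q this
  obtain ⟨ρ, hρ⟩ := exists_algHom_ker_eq (k := k) Q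
  obtain ⟨r', hrr', hr'⟩ := hL.exists_isFiber_integralClosure
  have : SMulCommClass Gal(L/RatFunc k) k (integralClosure k[X] L) :=
    smulCommClass_of_isScalarTower _ k k[X] _
  have : IsIntegrallyClosed (integralClosure k[X] L) :=
    integralClosure.isIntegrallyClosedOfFiniteExtension (RatFunc k)
  have hs : ρ.comp (MulSemiringAction.toAlgHom k _ σ) = ρ := by
    ext b
    have := hσ b
    rwa [← hρ, RingHom.mem_ker, map_sub, sub_eq_zero] at this
  have hz : algebraMap k[X] (integralClosure k[X] L) X ≠ 0 := fun h ↦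
    hL.ne_zero congr(($h : integralClosure k[X] L).val)
  refine hL.eq_one_of_forall_eq ?_ fun i ↦ ?_
  · simp [IsScalarTower.algebraMap_apply k[X] (RatFunc k) L]
  · rw [← hrr']
    exact congr($(H.apply_eq_self hr' hs hz (smul_algebraMap σ X) i).val)

/- A lift of `z ↦ ζ z` to `L` permutes the places over `z = 0`; composed with a suitable element
of the Galois group it fixes one of them. -/
theorem exists_algEquiv_algHom_comp_eq [FiniteDimensional (RatFunc k) L] [IsGalois (RatFunc k) L]
    {ζ : k} {τ : L ≃ₐ[k] L}
    (hτ : τ (algebraMap k[X] L X) = algebraMap k L ζ * algebraMap k[X] L X) :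
    ∃ (σ : L ≃ₐ[k] L) (s : integralClosure k[X] L →ₐ[k] integralClosure k[X] L)
      (ρ : integralClosure k[X] L →ₐ[k] k),
      σ (algebraMap k[X] L X) = algebraMap k L ζ * algebraMap k[X] L X ∧
      (∀ b, (s b : L) = σ b) ∧ ρ.comp s = ρ ∧
      ρ (algebraMap k[X] (integralClosure k[X] L) X) = 0 := by
  have : FaithfulSMul k[X] L := .trans k[X] (RatFunc k) L
  have : Module.Finite k[X] (integralClosure k[X] L) :=
    IsIntegralClosure.finite k[X] (RatFunc k) L _
  have : IsFractionRing (integralClosure k[X] L) L :=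
    integralClosure.isFractionRing_of_finite_extension (RatFunc k) L
  have : IsGaloisGroup Gal(L/RatFunc k) k[X] (integralClosure k[X] L) :=
    .of_isFractionRing _ _ _ (RatFunc k) L
  obtain ⟨ρ, hρ⟩ := exists_algHom_algebraMap_X_eq (B := integralClosure k[X] L) (0 : k)
  obtain ⟨t, ht⟩ := exists_algHom_integralClosure (τ : L →ₐ[k] L) hτ
  have htX : t (algebraMap k[X] _ X) = algebraMap k _ ζ * algebraMap k[X] _ X :=
    Subtype.ext ((ht _).trans hτ)
  have hρt (x : k[X]) : ρ (algebraMap k[X] _ x) = ρ.comp t (algebraMap k[X] _ x) := by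
    refine DFunLike.congr_fun (f := ρ.comp (IsScalarTower.toAlgHom k k[X] _))
      (g := (ρ.comp t).comp (IsScalarTower.toAlgHom k k[X] _)) (Polynomial.algHom_ext ?_) x
    simp [htX, hρ]
  obtain ⟨η, hη⟩ := exists_algHom_smul_eq Gal(L/RatFunc k) hρt
  have : SMulCommClass Gal(L/RatFunc k) k (integralClosure k[X] L) :=
    smulCommClass_of_isScalarTower _ k k[X] _
  refine ⟨τ * η.restrictScalars k, t.comp (MulSemiringAction.toAlgHom k _ η), ρ, ?_, ?_, ?_, hρ⟩
  · have hηX : η (algebraMap k[X] L X) = algebraMap k[X] L X := by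
      simp [IsScalarTower.algebraMap_apply k[X] (RatFunc k) L]
    exact (congrArg τ hηX).trans hτ
  · exact fun b ↦ ht (η • b)
  · ext b
    exact hη b

theorem exists_algEquiv_pow_apply_eq_iff [FiniteDimensional (RatFunc k) L]
    [IsGalois (RatFunc k) L] (hL : IsKummerGaloisClosure h g e (algebraMap k[X] L X) r)
    (H : IsTameCover h g e) {ζ : k} (hζ : ζ ^ e = 1) {τ : L ≃ₐ[k] L}
    (hτ : τ (algebraMap k[X] L X) = algebraMap k L ζ * algebraMap k[X] L X) :
    ∃ (σ : L ≃ₐ[k] L) (a : ι → k), IsFiber h g 0 a ∧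
      σ (algebraMap k[X] L X) = algebraMap k L ζ * algebraMap k[X] L X ∧
      ∀ i j, (σ ^ j) (r i) = r i ↔ ζ ^ (j * (e / h.rootMultiplicity (a i))) = 1 := by
  obtain ⟨r', hrr', hr'⟩ := hL.exists_isFiber_integralClosure
  obtain ⟨σ, s, ρ, hσ, hs, hρs, hρ⟩ := exists_algEquiv_algHom_comp_eq hτ
  have : IsIntegrallyClosed (integralClosure k[X] L) :=
    integralClosure.isIntegrallyClosedOfFiniteExtension (RatFunc k)
  have hz : algebraMap k[X] (integralClosure k[X] L) X ≠ 0 := fun h ↦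
    hL.ne_zero congr(($h : integralClosure k[X] L).val)
  have hpow (j : ℕ) : ρ.comp (s ^ j) = ρ ∧ ∀ b, ((s ^ j) b : L) = (σ ^ j) b := by
    induction j with
    | zero => exact ⟨rfl, fun _ ↦ rfl⟩
    | succ j ih =>
      refine ⟨?_, fun b ↦ ?_⟩
      · rw [pow_succ]
        exact (AlgHom.comp_assoc ρ (s ^ j) s).symm.trans (by rw [ih.1, hρs])
      · rw [pow_succ, pow_succ, AlgHom.mul_apply, ih.2, hs, AlgEquiv.mul_apply]
  have hσpow (j : ℕ) : (σ ^ j) (algebraMap k[X] L X) =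
      algebraMap k L (ζ ^ j) * algebraMap k[X] L X := by
    induction j with
    | zero => simp
    | succ j ih =>
      rw [pow_succ, AlgEquiv.mul_apply, hσ, map_mul, ih, AlgEquiv.commutes, pow_succ', map_mul,
        mul_assoc]
  refine ⟨σ, ρ ∘ r', ?_, hσ, fun i j ↦ ?_⟩
  · simpa [hρ, H.ne_zero] using hr'.map ρ
  · rw [pow_mul, ← hrr', ← (hpow j).2, Subtype.coe_inj]
    refine H.apply_eq_self_iff hr' (hpow j).1 hz hρ ?_ (Subtype.ext ?_) i
    · rw [← pow_mul, mul_comm, pow_mul, hζ, one_pow]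
    · exact ((hpow j).2 _).trans (hσpow j)

end IsKummerGaloisClosure

/-! ### Discriminants -/

theorem resultant_prod_X_sub_C_derivative {S : Type*} [CommRing S] [IsDomain S] {n : ℕ}
    (v : Fin n → S) :
    resultant (∏ i, (X - C (v i))) (derivative (∏ i, (X - C (v i)))) n (n - 1) =
      ∏ i, ∏ j ∈ {i}ᶜ, (v i - v j) := by
  have hn : (∏ i, (X - C (v i))).natDegree = n := by simp
  have hd : (derivative (∏ i, (X - C (v i)))).natDegree ≤ n - 1 :=
    (natDegree_derivative_le _).trans_eq (by rw [hn])
  have hprod := resultant_prod_left Finset.univ (fun i ↦ X - C (v i)) _ _ (by simp) hd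
  rw [hn] at hprod
  refine hprod.trans (Finset.prod_congr rfl fun i _ ↦ ?_)
  rw [natDegree_X_sub_C, resultant_X_sub_C_left _ _ _ hd]
  simpa [eval_prod, Lagrange.nodal, Finset.compl_singleton] using
    Lagrange.eval_nodal_derivative_eval_node_eq (v := v) (Finset.mem_univ i)

theorem sq_det_vandermonde {S : Type*} [CommRing S] {n : ℕ} (v : Fin n → S) :
    (Matrix.vandermonde v).det ^ 2 =
      (-1) ^ (n * (n - 1) / 2) * ∏ i, ∏ j ∈ {i}ᶜ, (v i - v j) := by
  have hIoi : ∏ i, ∏ j ∈ Finset.Ioi i, (v i - v j) =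
      (-1) ^ (n * (n - 1) / 2) * (Matrix.vandermonde v).det := by
    have hneg (i : Fin n) : ∏ j ∈ Finset.Ioi i, (v i - v j) =
        (-1) ^ (n - 1 - i) * ∏ j ∈ Finset.Ioi i, (v j - v i) := by
      rw [← Fin.card_Ioi, ← Finset.prod_neg]
      simp_rw [neg_sub]
    simp_rw [hneg, Finset.prod_mul_distrib, Finset.prod_pow_eq_pow_sum, Matrix.det_vandermonde]
    rw [Fin.sum_univ_eq_sum_range (fun i ↦ n - 1 - i) n, Finset.sum_range_reflect (fun i ↦ i),
      Finset.sum_range_id]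
  have hIio : ∏ i, ∏ j ∈ Finset.Iio i, (v i - v j) = (Matrix.vandermonde v).det := by
    rw [Matrix.det_vandermonde]
    exact Finset.prod_comm' (by simp)
  simp_rw [← Finset.Ioi_disjUnion_Iio, Finset.prod_disjUnion, Finset.prod_mul_distrib]
  rw [hIoi, hIio, ← mul_assoc, ← mul_assoc, ← mul_pow]
  simp [sq]

/-- The discriminant, as a polynomial in `t`, of the polynomial `h - t g` of degree `n`. -/
noncomputable def fiberDiscr {k : Type*} [CommRing k] (h g : k[X]) (n : ℕ) : k[X] :=
  (-1) ^ (n * (n - 1) / 2) *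
    resultant (h.map C - C X * g.map C) (derivative (h.map C - C X * g.map C)) n (n - 1)

theorem IsFiber.aeval_fiberDiscr {k S : Type*} [CommRing k] [CommRing S] [IsDomain S]
    [Algebra k S] {n : ℕ} {h g : k[X]} {t : S} {r : Fin n → S} (hr : IsFiber h g t r) :
    aeval t (fiberDiscr h g n) = (Matrix.vandermonde r).det ^ 2 := by
  have hmap : (h.map C - C X * g.map C).map (aeval (R := k) t : k[X] →+* S) =
      ∏ i, (X - C (r i)) := by
    rw [← hr]
    have : (aeval (R := k) t : k[X] →+* S).comp C = algebraMap k S := by ext; simp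
    simp [Polynomial.map_map, this]
  have hres : aeval t (resultant (h.map C - C X * g.map C)
      (derivative (h.map C - C X * g.map C)) n (n - 1)) = ∏ i, ∏ j ∈ {i}ᶜ, (r i - r j) := by
    rw [← resultant_prod_X_sub_C_derivative, ← hmap, derivative_map, resultant_map_map]
    rfl
  rw [fiberDiscr, map_mul, hres, sq_det_vandermonde]
  simp

theorem exists_eq_C_mul_X_pow_of_forall_isRoot {k : Type*} [Field k] [IsAlgClosed k] {d : k[X]}
    (hd : ∀ c, d.IsRoot c → c = 0) : ∃ u m, d = C u * X ^ m := by
  have hroots : d.roots = Multiset.replicate d.natDegree 0 :=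
    Multiset.eq_replicate.mpr ⟨IsAlgClosed.card_roots_eq_natDegree, fun c hc ↦
      hd c (isRoot_of_mem_roots hc)⟩
  refine ⟨d.leadingCoeff, d.natDegree, ?_⟩
  conv_lhs => rw [(IsAlgClosed.splits d).eq_prod_roots, hroots]
  simp

theorem IsTameCover.exists_fiberDiscr_eq {k : Type*} [Field k] [IsAlgClosed k] {h g : k[X]}
    {e n : ℕ} (H : IsTameCover h g e) (hn : h.natDegree = n) :
    ∃ u m, fiberDiscr h g n = C u * X ^ m := by
  refine exists_eq_C_mul_X_pow_of_forall_isRoot fun c hc ↦ ?_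
  by_contra hc0
  have hsep := H.separable_sub_C_mul (S := k) hc0
  obtain ⟨r, hr⟩ := exists_eq_prod_X_sub_C_of_splits (IsAlgClosed.splits (h - C c * g))
    (monic_sub_C_mul H.monic H.degree_lt c)
    ((natDegree_eq_natDegree (degree_sub_eq_left_of_degree_lt
      ((degree_C_mul hc0).trans_lt H.degree_lt))).trans hn)
  have hr' : IsFiber h g c r := by simpa [IsFiber] using hr
  have := hr'.aeval_fiberDiscr
  rw [coe_aeval_eq_eval, hc.eq_zero] at this
  exact Matrix.det_vandermonde_ne_zero_iff.mpr (hr'.injective hsep)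
    (sq_eq_zero_iff.mp this.symm)

theorem map_det_vandermonde_of_forall_eq {S : Type*} [CommRing S] {n : ℕ} {v : Fin n → S}
    (σ : S →+* S) {π : Equiv.Perm (Fin n)} (hπ : ∀ i, σ (v i) = v (π i)) :
    σ (Matrix.vandermonde v).det = (Equiv.Perm.sign π : ℤ) * (Matrix.vandermonde v).det := by
  rw [← Matrix.det_permute, RingHom.map_det]
  congr 1
  ext i j
  simp [Matrix.vandermonde_apply, hπ]

/- The discriminant of the fiber over `x = z ^ e` is a monomial in `x`, hence a square in `k(z)`. -/
theorem IsTameCover.sign_eq_one {k L : Type*} [Field k] [IsAlgClosed k] [Field L] [Algebra k L]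
    {h g : k[X]} {e n : ℕ} (H : IsTameCover h g e) (hn : h.natDegree = n) {z : L}
    {r : Fin n → L} (hr : IsFiber h g (z ^ e) r) (hinj : Function.Injective r) (σ : L →ₐ[k] L)
    (hσ : σ z = z) {π : Equiv.Perm (Fin n)} (hπ : ∀ i, σ (r i) = r (π i)) :
    Equiv.Perm.sign π = 1 := by
  have h2 : (2 : L) ≠ 0 := by
    simpa only [map_ofNat] using (map_ne_zero (algebraMap k L)).mpr H.two_ne_zero
  have hδ := Matrix.det_vandermonde_ne_zero_iff.mpr hinj
  obtain ⟨u, m, hd⟩ := H.exists_fiberDiscr_eq hn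
  obtain ⟨q, hq⟩ := H.even
  obtain ⟨v, rfl⟩ := IsAlgClosed.exists_pow_nat_eq u two_pos
  have hsq : (Matrix.vandermonde r).det ^ 2 = (algebraMap k L v * z ^ (q * m)) ^ 2 := by
    rw [← hr.aeval_fiberDiscr, hd, hq]
    simp
    ring
  have hfix : σ (Matrix.vandermonde r).det = (Matrix.vandermonde r).det := by
    rcases sq_eq_sq_iff_eq_or_eq_neg.mp hsq with h | h <;> simp [h, hσ]
  have hsign := map_det_vandermonde_of_forall_eq (σ : L →+* L) hπ
  rcases Int.units_eq_one_or (Equiv.Perm.sign π) with h | h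
  · exact h
  · rw [RingHom.coe_coe, hfix, h, Units.val_neg, Units.val_one, Int.cast_neg, Int.cast_one] at hsign
    exact absurd (by linear_combination hsign) (mul_ne_zero h2 hδ)

/-! ### Primitivity -/

section Primitivity
open IntermediateField

theorem isPreprimitive_orbit_of_isAtom_adjoin {F L : Type*} [Field F] [Field L] [Algebra F L]
    [FiniteDimensional F L] [IsGalois F L] {y : L} (hy : IsAtom F⟮y⟯) :
    MulAction.IsPreprimitive Gal(L/F) (MulAction.orbit Gal(L/F) y) := by
  let y' : MulAction.orbit Gal(L/F) y := ⟨y, MulAction.mem_orbit_self y⟩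
  have hstab : MulAction.stabilizer Gal(L/F) y' = F⟮y⟯.fixingSubgroup := by
    ext σ
    simpa [MulAction.mem_stabilizer_iff, Subtype.ext_iff, IntermediateField.mem_fixingSubgroup_iff]
      using! (forall_mem_adjoin_smul_eq_self_iff F (S := {y}) σ).symm
  have hcoatom : IsCoatom F⟮y⟯.fixingSubgroup :=
    isAtom_dual_iff_isCoatom.mp
      ((IsGalois.intermediateFieldEquivSubgroup (F := F) (E := L)).isAtom_iff F⟮y⟯ |>.mpr hy)
  have : Nontrivial (MulAction.orbit Gal(L/F) y) := by
    by_contra! hsub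
    refine hcoatom.1 (hstab ▸ top_le_iff.mp fun σ _ ↦ Subsingleton.elim _ _)
  rwa [← MulAction.isCoatom_stabilizer_iff_preprimitive Gal(L/F) y', hstab]

theorem isAtom_adjoin_of_isCoatom_adjoin {k L : Type*} [Field k] [Field L] [Algebra k L]
    {f : RatFunc k} (hf : IsCoatom k⟮f⟯) (φ : RatFunc k →ₐ[k] L) : IsAtom k⟮φ f⟯⟮φ RatFunc.X⟯ := by
  have hmap : k⟮f⟯.map φ = k⟮φ f⟯ := by simp [adjoin_map]
  have hrange : (k⟮φ f⟯⟮φ RatFunc.X⟯).restrictScalars k ≤ φ.fieldRange := by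
    rw [adjoin_simple_adjoin_simple, adjoin_le_iff]
    rintro w (rfl | rfl)
    exacts [⟨f, rfl⟩, ⟨RatFunc.X, rfl⟩]
  have hX {E : IntermediateField k (RatFunc k)} (hE : RatFunc.X ∈ E) : E = ⊤ := by
    rwa [← top_le_iff, ← RatFunc.adjoin_X, adjoin_simple_le_iff]
  refine ⟨fun hbot ↦ hf.1 (hX ?_), fun E hE ↦ ?_⟩
  · obtain ⟨⟨w, hw⟩, hwX⟩ := mem_bot.mp (hbot ▸ mem_adjoin_simple_self k⟮φ f⟯ (φ RatFunc.X))
    obtain ⟨u, hu, rfl⟩ := hmap ▸ hw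
    rwa [← φ.injective hwX]
  · have hfE : f ∈ (E.restrictScalars k).comap φ :=
      E.algebraMap_mem (AdjoinSimple.gen k (φ f))
    rcases hf.le_iff.mp (adjoin_simple_le_iff.mpr hfE) with htop | heq
    · refine absurd hE (not_lt_of_ge (adjoin_simple_le_iff.mpr ?_))
      exact (htop ▸ mem_top : RatFunc.X ∈ (E.restrictScalars k).comap φ)
    · refine eq_bot_iff.mpr fun w hw ↦ ?_
      obtain ⟨u, rfl⟩ := hrange (hE.le hw)
      have hu : u ∈ k⟮f⟯ := heq ▸ hw
      exact mem_bot.mpr ⟨⟨φ u, hmap ▸ ⟨u, hu, rfl⟩⟩, rfl⟩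

theorem isPreprimitive_range_permHom {G α ι : Type*} [Group G] [MulAction G α] {r : ι → α}
    (hr : Function.Injective r) (hG : ∀ (g : G) (i : ι), ∃ j, r j = g • r i) (i : ι)
    (htrans : ∀ j, ∃ g : G, g • r i = r j)
    (hi : MulAction.IsPreprimitive G (MulAction.orbit G (r i))) :
    MulAction.IsPreprimitive (permHom hr hG).range ι := by
  have hmem (w : MulAction.orbit G (r i)) : ∃ j, r j = w := by
    obtain ⟨_, g, rfl⟩ := w
    exact hG g i
  choose f hf using hmem
  let F : MulAction.orbit G (r i) →ₑ[(permHom hr hG).rangeRestrict] ι :=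
    { toFun := f
      map_smul' := fun g w ↦ hr <| by
        rw [hf]
        exact (congrArg (g • ·) (hf w).symm).trans (permHom_spec hr hG g (f w)).symm }
  refine MulAction.IsPreprimitive.of_surjective (f := F) fun j ↦ ?_
  obtain ⟨g, hg⟩ := htrans j
  exact ⟨⟨r j, g, hg⟩, hr (hf _)⟩

end Primitivity

/-! ### The monodromy group -/

section
open IntermediateField

theorem exists_algEquiv_adjoin_forall_apply_eq {k L : Type*} [Field k] [Field L] [Algebra k L]
    {x : L} (σ : L ≃ₐ[k] L) (hσ : σ x = x) :
    ∃ τ : Gal(L/k⟮x⟯), ∀ y, τ y = σ y := by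
  have hmem : σ ∈ fixingSubgroup k⟮x⟯ := by
    rw [IntermediateField.mem_fixingSubgroup_iff]
    exact (forall_mem_adjoin_smul_eq_self_iff (S := {x}) k σ).mpr (by simpa using hσ)
  exact ⟨fixingSubgroupEquiv k⟮x⟯ ⟨σ, hmem⟩, fun _ ↦ rfl⟩

theorem exists_algEquiv_ratFunc_forall_apply_eq {k L : Type*} [Field k] [Field L]
    [Algebra k L] [Algebra (RatFunc k) L] [IsScalarTower k (RatFunc k) L] (σ : L ≃ₐ[k] L)
    (hσ : σ (algebraMap (RatFunc k) L RatFunc.X) = algebraMap (RatFunc k) L RatFunc.X) :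
    ∃ τ : Gal(L/RatFunc k), ∀ y, τ y = σ y := by
  have hcomp : (σ : L →ₐ[k] L).comp (IsScalarTower.toAlgHom k (RatFunc k) L) =
      IsScalarTower.toAlgHom k (RatFunc k) L := by
    have := algHom_ext_of_eq_adjoin k RatFunc.adjoin_X.symm
      (φ₁ := ((σ : L →ₐ[k] L).comp (IsScalarTower.toAlgHom k (RatFunc k) L)).comp (val ⊤))
      (φ₂ := (IsScalarTower.toAlgHom k (RatFunc k) L).comp (val ⊤))
      (by rintro _ rfl; exact hσ)
    ext x
    exact congr($this ⟨x, mem_top⟩)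
  exact ⟨AlgEquiv.ofRingEquiv (f := σ) fun x ↦ congr($hcomp x), fun _ ↦ rfl⟩

end

namespace IsKummerGaloisClosure
open IntermediateField
variable {k L ι : Type*} [Field k] [Field L] [Algebra k L] [Fintype ι]
  {h g : k[X]} {e : ℕ} {z : L} {r : ι → L}

theorem transcendental_pow (hL : IsKummerGaloisClosure h g e z r) (H : IsTameCover h g e) :
    Transcendental k (z ^ e) :=
  hL.transcendental.pow (Nat.pos_of_ne_zero H.ne_zero)

theorem exists_eq_smul {F : Type*} [Field F] [Algebra k F] [Algebra F L] [IsScalarTower k F L]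
    (hL : IsKummerGaloisClosure h g e z r) {x : F}
    (hx : algebraMap F L x = z ^ e) (σ : Gal(L/F)) (i : ι) : ∃ j, r j = σ • r i :=
  hL.isFiber.exists_eq_apply (σ.restrictScalars k : L →ₐ[k] L) (hx ▸ σ.commutes x) i

variable [IsAlgClosed k]

theorem injective (hL : IsKummerGaloisClosure h g e z r) (H : IsTameCover h g e) :
    Function.Injective r :=
  hL.isFiber.injective (H.separable_sub_C_mul (pow_ne_zero e hL.ne_zero))

section
variable {F : Type*} [Field F] [Algebra k F] [Algebra F L] [IsScalarTower k F L]

/-- The action by permutations on the fiber over `x = z ^ e` of the Galois group of the closure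
over a field containing `x`. -/
noncomputable def monodromy (hL : IsKummerGaloisClosure h g e z r) (H : IsTameCover h g e) {x : F}
    (hx : algebraMap F L x = z ^ e) : Gal(L/F) →* Equiv.Perm ι :=
  permHom (hL.injective H) (hL.exists_eq_smul hx)

theorem monodromy_spec (hL : IsKummerGaloisClosure h g e z r) (H : IsTameCover h g e) {x : F}
    (hx : algebraMap F L x = z ^ e) (σ : Gal(L/F)) (i : ι) :
    r (hL.monodromy H hx σ i) = σ (r i) :=
  permHom_spec (hL.injective H) _ σ i

end

theorem finiteDimensional_isGalois_adjoin (hL : IsKummerGaloisClosure h g e z r)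
    (H : IsTameCover h g e) : FiniteDimensional k⟮z ^ e⟯ L ∧ IsGalois k⟮z ^ e⟯ L :=
  hL.finiteDimensional_isGalois H (AdjoinSimple.algebraMap_gen k (z ^ e))

theorem isPreprimitive_range_monodromy [Nonempty ι] (hL : IsKummerGaloisClosure h g e z r)
    (H : IsTameCover h g e)
    (hf : IsCoatom k⟮(algebraMap k[X] (RatFunc k) h / algebraMap k[X] (RatFunc k) g)⟯) :
    MulAction.IsPreprimitive
      (hL.monodromy H (AdjoinSimple.algebraMap_gen k (z ^ e))).range ι := by
  obtain ⟨_, _⟩ := hL.finiteDimensional_isGalois_adjoin H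
  obtain ⟨i⟩ := ‹Nonempty ι›
  have hgr : aeval (r i) g ≠ 0 := fun hg0 ↦ by
    obtain ⟨u, v, huv⟩ := H.isCoprime
    simpa [hL.isFiber.aeval_eq_mul, hg0] using congr(aeval (r i) $huv)
  have hx : aeval (r i) h / aeval (r i) g = z ^ e := by
    rw [hL.isFiber.aeval_eq_mul, mul_div_cancel_right₀ _ hgr]
  have hr : Transcendental k (r i) := fun hr ↦ hL.transcendental_pow H <| by
    rw [← hx]
    rw [← mem_algebraicClosure_iff] at hr ⊢
    have hmem (p : k[X]) : aeval (r i) p ∈ algebraicClosure k L :=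
      Algebra.adjoin_le (S := (algebraicClosure k L).toSubalgebra) (by simpa using hr)
        (aeval_mem_adjoin_singleton k (r i))
    exact div_mem (hmem h) (hmem g)
  let φ : RatFunc k →ₐ[k] L :=
    k⟮r i⟯.val.comp (RatFunc.algEquivOfTranscendental (r i) hr : RatFunc k →ₐ[k] k⟮r i⟯)
  have hφX : φ RatFunc.X = r i := RatFunc.algEquivOfTranscendental_X (r i) hr
  have hφ (p : k[X]) : φ (algebraMap k[X] (RatFunc k) p) = aeval (r i) p := by
    simp [φ]
  have hatom := isAtom_adjoin_of_isCoatom_adjoin hf φ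
  rw [map_div₀, hφ, hφ, hφX, hx] at hatom
  exact isPreprimitive_range_permHom (hL.injective H) _ i
    (fun j ↦ exists_algEquiv_apply_eq H.monic H.isCoprime H.degree_lt (hL.transcendental_pow H)
      (hL.isFiber.aeval_eq_mul i) (hL.isFiber.aeval_eq_mul j))
    (isPreprimitive_orbit_of_isAtom_adjoin hatom)

theorem exists_algEquiv_apply_eq_mul (hL : IsKummerGaloisClosure h g e z r)
    (H : IsTameCover h g e) {ζ : k} (hζ : ζ ^ e = 1) :
    ∃ τ : L ≃ₐ[k] L, τ z = algebraMap k L ζ * z := by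
  obtain ⟨_, _⟩ := hL.finiteDimensional_isGalois_adjoin H
  have hζL : algebraMap k L ζ ^ e = 1 := by rw [← map_pow, hζ, map_one]
  obtain ⟨τ, hτ⟩ := exists_algEquiv_apply_eq (monic_X_pow e) isCoprime_one_right
    (by simp [H.ne_zero, Nat.pos_iff_ne_zero]) (hL.transcendental_pow H) (y := z)
    (y' := algebraMap k L ζ * z) (by simp) (by simp [mul_pow, hζL])
  exact ⟨τ.restrictScalars k, hτ⟩

end IsKummerGaloisClosure

/-- The local condition at the points over `0` which makes the monodromy group of an indecomposable
`h / g` symmetric: a power of an inertia generator is a transposition, or, in degree `4`, an inertia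
generator is a `4`-cycle. -/
def HasFullInertia {k : Type*} [Field k] (h : k[X]) (e : ℕ) : Prop :=
  (¬ 4 ∣ e ∧ ∃ a, h.rootMultiplicity a = 2 ∧
    ∀ b ≠ a, h.IsRoot b → Odd (h.rootMultiplicity b)) ∨ h = X ^ 4 ∧ e = 4

namespace IsKummerGaloisClosure
open IntermediateField

section
variable {k L ι : Type*} [Field k] [IsAlgClosed k] [Field L] [Algebra k L] [Algebra k[X] L]
  [Algebra (RatFunc k) L] [IsScalarTower k[X] (RatFunc k) L] [IsScalarTower k k[X] L]
  [IsScalarTower k (RatFunc k) L] [FiniteDimensional (RatFunc k) L] [IsGalois (RatFunc k) L]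
  [Fintype ι] {h g : k[X]} {e : ℕ} {r : ι → L}

theorem exists_mem_range_monodromy
    (hL : IsKummerGaloisClosure h g e (algebraMap k[X] L X) r) (H : IsTameCover h g e) {ζ : k}
    (hζ : ζ ^ e = 1) :
    ∃ s ∈ (hL.monodromy H (AdjoinSimple.algebraMap_gen k (algebraMap k[X] L X ^ e))).range,
      ∃ a : ι → k, IsFiber h g 0 a ∧
        ∀ i j, (s ^ j) i = i ↔ ζ ^ (j * (e / h.rootMultiplicity (a i))) = 1 := by
  obtain ⟨τ, hτ⟩ := hL.exists_algEquiv_apply_eq_mul H hζ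
  obtain ⟨σ, a, ha, hσ, hfix⟩ := hL.exists_algEquiv_pow_apply_eq_iff H hζ hτ
  obtain ⟨σ', hσ'⟩ := exists_algEquiv_adjoin_forall_apply_eq (x := algebraMap k[X] L X ^ e) σ
    (by rw [map_pow, hσ, mul_pow, ← map_pow, hζ, map_one, one_mul])
  have hpow (j : ℕ) (y : L) : (σ' ^ j) y = (σ ^ j) y := by
    induction j generalizing y with
    | zero => rfl
    | succ j ih => rw [pow_succ, pow_succ, AlgEquiv.mul_apply, AlgEquiv.mul_apply, hσ', ih]
  refine ⟨_, ⟨σ', rfl⟩, a, ha, fun i j ↦ ?_⟩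
  rw [← hfix, ← map_pow, ← (hL.injective H).eq_iff, hL.monodromy_spec H, hpow]

theorem exists_isSwap_mem_range_monodromy
    (hL : IsKummerGaloisClosure h g e (algebraMap k[X] L X) r) (H : IsTameCover h g e)
    (he : ¬ 4 ∣ e) {b : k} (hb : h.rootMultiplicity b = 2)
    (hodd : ∀ c ≠ b, h.IsRoot c → Odd (h.rootMultiplicity c)) [DecidableEq ι] :
    ∃ s ∈ (hL.monodromy H (AdjoinSimple.algebraMap_gen k (algebraMap k[X] L X ^ e))).range,
      s.IsSwap := by
  classical
  obtain ⟨s, hs, a, ha, hsa⟩ := hL.exists_mem_range_monodromy H H.even.neg_one_pow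
  refine ⟨s, hs, Equiv.Perm.card_support_eq_two.mp ?_⟩
  rw [← hb, ← ha.card_filter_eq b]
  congr 1
  ext i
  have hroot : h.IsRoot (a i) := by simpa using ha.aeval_eq_mul i
  obtain ⟨q, hq⟩ := H.rootMultiplicity_dvd _ hroot
  have hm := (rootMultiplicity_pos H.monic.ne_zero).mpr hroot
  have hne : (-1 : k) ≠ 1 := fun h1 ↦ H.two_ne_zero <| by linear_combination -h1
  have hfix := hsa i 1
  rw [pow_one, one_mul, neg_one_pow_eq_one_iff_even hne, hq, Nat.mul_div_cancel_left q hm] at hfix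
  rw [Equiv.Perm.mem_support, ne_eq, hfix, Finset.mem_filter_univ]
  refine ⟨fun hqe ↦ ?_, fun hab hqe ↦ he ?_⟩
  · by_contra hab
    have heven := H.even
    rw [hq, Nat.even_mul] at heven
    exact heven.elim (Nat.not_even_iff_odd.mpr (hodd _ hab hroot)) hqe
  · rw [hq, hab, hb]
    exact mul_dvd_mul_left 2 hqe.two_dvd

theorem exists_mem_range_monodromy_forall_ne
    (hL : IsKummerGaloisClosure h g e (algebraMap k[X] L X) r) (H : IsTameCover h g e)
    (hh : h = X ^ e) (he : 2 < e) :
    ∃ s ∈ (hL.monodromy H (AdjoinSimple.algebraMap_gen k (algebraMap k[X] L X ^ e))).range,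
      ∀ i, s (s i) ≠ i := by
  have : NeZero (e : k) := ⟨H.natCast_ne_zero⟩
  obtain ⟨ζ, hζ⟩ := HasEnoughRootsOfUnity.exists_primitiveRoot k e
  obtain ⟨s, hs, a, ha, hsa⟩ := hL.exists_mem_range_monodromy H hζ.pow_eq_one
  refine ⟨s, hs, fun i hi ↦ ?_⟩
  have hai : a i = 0 := by
    have := ha.aeval_eq_mul i
    rw [hh] at this
    simpa [H.ne_zero] using this
  have hm : h.rootMultiplicity (a i) = e := by
    rw [hai, hh]
    simpa using rootMultiplicity_X_sub_C_pow (0 : k) e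
  have := (hsa i 2).mp hi
  rw [hm, Nat.div_self (by lia), mul_one, hζ.pow_eq_one_iff_dvd] at this
  exact he.not_ge (Nat.le_of_dvd two_pos this)

theorem range_monodromy_eq_top {n : ℕ} (hn : h.natDegree = n) [NeZero n] {r : Fin n → L}
    (hL : IsKummerGaloisClosure h g e (algebraMap k[X] L X) r) (H : IsTameCover h g e)
    (hf : IsCoatom k⟮(algebraMap k[X] (RatFunc k) h / algebraMap k[X] (RatFunc k) g)⟯)
    (hh : HasFullInertia h e) :
    (hL.monodromy H (AdjoinSimple.algebraMap_gen k (algebraMap k[X] L X ^ e))).range = ⊤ := by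
  have hprim := hL.isPreprimitive_range_monodromy H hf
  rcases hh with ⟨he, b, hb, hodd⟩ | ⟨hX, rfl⟩
  · obtain ⟨s, hs, hswap⟩ := hL.exists_isSwap_mem_range_monodromy H he hb hodd
    exact Equiv.Perm.subgroup_eq_top_of_isPreprimitive_of_isSwap_mem hprim s hswap hs
  · obtain rfl : n = 4 := by rw [← hn, hX, natDegree_X_pow]
    obtain ⟨s, hs, hne⟩ := hL.exists_mem_range_monodromy_forall_ne H hX (by norm_num)
    exact subgroup_perm_fin_four_eq_top hprim hs hne

end

section
variable {k L ι : Type*} [Field k] [IsAlgClosed k] [Field L] [Algebra k L]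
  [Fintype ι] {h g : k[X]} {e : ℕ} {z : L} {r : ι → L}

theorem exists_apply_eq_mul (hL : IsKummerGaloisClosure h g e z r) (H : IsTameCover h g e)
    (σ : Gal(L/k⟮z ^ e⟯)) : ∃ c : k, σ z = algebraMap k L c * z := by
  have hpow : (σ z / z) ^ e = 1 := by
    rw [div_pow, ← map_pow, div_eq_one_iff_eq (pow_ne_zero e hL.ne_zero)]
    exact σ.commutes (AdjoinSimple.gen k (z ^ e))
  have : NeZero (e : k) := ⟨H.natCast_ne_zero⟩
  have : NeZero e := ⟨H.ne_zero⟩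
  obtain ⟨ζ, hζ⟩ := HasEnoughRootsOfUnity.exists_primitiveRoot k e
  obtain ⟨j, -, hj⟩ := (hζ.map_of_injective (algebraMap k L).injective).eq_pow_of_pow_eq_one hpow
  exact ⟨ζ ^ j, by rw [map_pow, hj, div_mul_cancel₀ _ hL.ne_zero]⟩

theorem apply_eq_self_of_mem_commutator (hL : IsKummerGaloisClosure h g e z r)
    (H : IsTameCover h g e) {σ : Gal(L/k⟮z ^ e⟯)} (hσ : σ ∈ commutator Gal(L/k⟮z ^ e⟯)) :
    σ z = z := by
  suffices commutator Gal(L/k⟮z ^ e⟯) ≤ MulAction.stabilizer _ z from this hσ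
  rw [commutator_def, Subgroup.commutator_le]
  intro τ _ τ' _
  obtain ⟨c, hc⟩ := hL.exists_apply_eq_mul H τ
  obtain ⟨c', hc'⟩ := hL.exists_apply_eq_mul H τ'
  have hk (ρ : Gal(L/k⟮z ^ e⟯)) (a : k) : ρ (algebraMap k L a) = algebraMap k L a :=
    ρ.commutes (algebraMap k k⟮z ^ e⟯ a)
  have hττ' : τ (τ' z) = algebraMap k L (c * c') * z := by
    rw [hc', map_mul, hk, hc, map_mul]; ring
  have hτ'τ : τ' (τ z) = algebraMap k L (c * c') * z := by
    rw [hc, map_mul, hk, hc', map_mul]; ring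
  have hfix : (τ * τ' * τ⁻¹ * τ'⁻¹) (τ' (τ z)) = τ (τ' z) := by
    simp [AlgEquiv.mul_apply]
  rw [hττ', hτ'τ, map_mul, hk] at hfix
  refine mul_left_cancel₀ (fun h0 ↦ ?_) hfix
  rw [h0, zero_mul, map_eq_zero, map_eq_zero] at hτ'τ
  exact hL.ne_zero hτ'τ

theorem mem_range_monodromy_ratFunc [DecidableEq ι] [Algebra (RatFunc k) L]
    [IsScalarTower k (RatFunc k) L]
    (hL : IsKummerGaloisClosure h g e (algebraMap (RatFunc k) L RatFunc.X) r)
    (H : IsTameCover h g e)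
    (htop : (hL.monodromy H
      (AdjoinSimple.algebraMap_gen k (algebraMap (RatFunc k) L RatFunc.X ^ e))).range = ⊤)
    {π : Equiv.Perm ι} (hπ : π ∈ alternatingGroup ι) :
    π ∈ (hL.monodromy H (map_pow (algebraMap (RatFunc k) L) RatFunc.X e)).range := by
  have hmem := alternatingGroup_le_commutator ι hπ
  rw [commutator_def, ← htop, MonoidHom.range_eq_map, ← Subgroup.map_commutator] at hmem
  obtain ⟨σ, hσ, rfl⟩ := hmem
  obtain ⟨τ, hτ⟩ := exists_algEquiv_ratFunc_forall_apply_eq (σ.restrictScalars k)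
    (hL.apply_eq_self_of_mem_commutator H hσ)
  refine ⟨τ, Equiv.ext fun i ↦ hL.injective H ?_⟩
  rw [hL.monodromy_spec H, hL.monodromy_spec H, hτ]
  rfl

theorem nonempty_mulEquiv_alternatingGroup {n : ℕ} (hn : h.natDegree = n)
    [Algebra (RatFunc k) L] [IsScalarTower k (RatFunc k) L] {z : L}
    (hz : algebraMap (RatFunc k) L RatFunc.X = z) {r : Fin n → L}
    (hL : IsKummerGaloisClosure h g e z r) (H : IsTameCover h g e)
    (htop : (hL.monodromy H (AdjoinSimple.algebraMap_gen k (z ^ e))).range = ⊤) :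
    Nonempty (Gal(L/RatFunc k) ≃* alternatingGroup (Fin n)) := by
  subst hz
  set φ := hL.monodromy H (map_pow (algebraMap (RatFunc k) L) RatFunc.X e) with φ_def
  have hz (σ : Gal(L/RatFunc k)) : σ (algebraMap (RatFunc k) L RatFunc.X) = _ := σ.commutes _
  have hrange : φ.range = alternatingGroup (Fin n) := by
    refine le_antisymm ?_ fun π ↦ hL.mem_range_monodromy_ratFunc H htop
    rintro _ ⟨σ, rfl⟩
    exact H.sign_eq_one hn hL.isFiber (hL.injective H) (σ.restrictScalars k : L →ₐ[k] L) (hz σ)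
      fun i ↦ (hL.monodromy_spec H _ σ i).symm
  have hinj : Function.Injective φ := (injective_iff_map_eq_one φ).mpr fun σ hσ ↦
    hL.eq_one_of_forall_eq (hz σ) fun i ↦ by
      rw [← hL.monodromy_spec H (map_pow (algebraMap (RatFunc k) L) RatFunc.X e), ← φ_def, hσ,
        Equiv.Perm.one_apply]
  exact ⟨(MonoidHom.ofInjective hinj).trans (MulEquiv.subgroupCongr hrange)⟩

end
end IsKummerGaloisClosure

/-! ### Indecomposable rational functions -/

section Indecomposability
open IntermediateField

theorem associated_of_isCoprime_of_mul_eq_mul {R : Type*} [CommRing R] [IsDomain R] {a b c d : R}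
    (hab : IsCoprime a b) (hcd : IsCoprime c d) (h : a * d = c * b) : Associated a c :=
  associated_of_dvd_dvd (hab.dvd_of_dvd_mul_right ⟨d, h.symm⟩) (hcd.dvd_of_dvd_mul_right ⟨b, h⟩)

theorem ne_zero_of_isCoprime_of_natDegree_lt {R : Type*} [CommRing R] [IsDomain R] {u v : R[X]}
    (huv : IsCoprime u v) (hd : v.natDegree < u.natDegree) : v ≠ 0 := by
  rintro rfl
  exact hd.ne' (natDegree_eq_zero_of_isUnit (isCoprime_zero_right.mp huv))

variable {k : Type*} [Field k]

theorem natDegree_eq_of_associated {a b : k[X]} (h : Associated a b) :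
    a.natDegree = b.natDegree :=
  natDegree_eq_of_degree_eq (degree_eq_degree_of_associated h)

theorem finrank_adjoin_div {u v : k[X]} (huv : IsCoprime u v) (hd : v.natDegree < u.natDegree) :
    Module.finrank k⟮algebraMap k[X] (RatFunc k) u / algebraMap k[X] (RatFunc k) v⟯ (RatFunc k) =
      u.natDegree := by
  set f := algebraMap k[X] (RatFunc k) u / algebraMap k[X] (RatFunc k) v with hf
  have hnum := (RatFunc.num_mul_eq_mul_denom_iff
    (ne_zero_of_isCoprime_of_natDegree_lt huv hd)).mpr hf
  have hfc := f.isCoprime_num_denom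
  rw [RatFunc.finrank_eq_max_natDegree,
    natDegree_eq_of_associated (associated_of_isCoprime_of_mul_eq_mul hfc huv hnum),
    natDegree_eq_of_associated (associated_of_isCoprime_of_mul_eq_mul hfc.symm huv.symm
      (by rw [mul_comm _ u, ← hnum, mul_comm])), max_eq_left hd.le]

theorem exists_natDegree_sub_C_mul_lt {a b : k[X]} (hb : b ≠ 0) (h : a.natDegree ≤ b.natDegree) :
    ∃ c, a - C c * b ≠ 0 → (a - C c * b).natDegree < b.natDegree := by
  refine ⟨a.coeff b.natDegree / b.leadingCoeff, fun hne ↦ lt_of_le_of_ne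
    ((natDegree_sub_le _ _).trans (max_le h (natDegree_C_mul_le _ _))) fun heq ↦ hne ?_⟩
  rw [← leadingCoeff_eq_zero, leadingCoeff, heq, coeff_sub, coeff_C_mul, coeff_natDegree,
    div_mul_cancel₀ _ (leadingCoeff_ne_zero.mpr hb), sub_self]

theorem adjoin_inv_sub_algebraMap {F K : Type*} [Field F] [Field K] [Algebra F K] (f : K) (c : F) :
    F⟮(f - algebraMap F K c)⁻¹⟯ = F⟮f⟯ := by
  apply le_antisymm <;> rw [adjoin_simple_le_iff]
  · exact inv_mem (sub_mem (mem_adjoin_simple_self _ _) (IntermediateField.algebraMap_mem _ c))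
  · simpa using add_mem (inv_mem (mem_adjoin_simple_self F (f - algebraMap F K c)⁻¹))
      (IntermediateField.algebraMap_mem _ c)

theorem algebraMap_ratFunc_eq (c : k) :
    algebraMap k (RatFunc k) c = algebraMap k[X] (RatFunc k) (C c) :=
  IsScalarTower.algebraMap_apply k k[X] (RatFunc k) c

-- Lüroth's theorem gives some generator `f`; if `f` does not have a pole at infinity, then
-- `(f - f(∞))⁻¹` does.
theorem exists_eq_adjoin_div {E : IntermediateField k (RatFunc k)} (hE : E ≠ ⊥) :
    ∃ u v : k[X], IsCoprime u v ∧ v.natDegree < u.natDegree ∧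
      E = k⟮algebraMap k[X] (RatFunc k) u / algebraMap k[X] (RatFunc k) v⟯ := by
  obtain ⟨f, hEf⟩ : ∃ f, E = k⟮f⟯ := ⟨_, RatFunc.Luroth.eq_adjoin_generator⟩
  rcases lt_or_ge f.denom.natDegree f.num.natDegree with hlt | hle
  · exact ⟨f.num, f.denom, f.isCoprime_num_denom, hlt, by rw [f.num_div_denom, hEf]⟩
  obtain ⟨c, hc⟩ := exists_natDegree_sub_C_mul_lt f.denom_ne_zero hle
  have hden : algebraMap k[X] (RatFunc k) f.denom ≠ 0 := by simpa using f.denom_ne_zero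
  have hsub : algebraMap k[X] (RatFunc k) (f.num - C c * f.denom) /
      algebraMap k[X] (RatFunc k) f.denom = f - algebraMap k (RatFunc k) c := by
    rw [map_sub, map_mul, sub_div, mul_div_cancel_right₀ _ hden, f.num_div_denom,
      ← algebraMap_ratFunc_eq]
  refine ⟨f.denom, f.num - C c * f.denom, ?_, hc ?_, ?_⟩
  · simpa only [sub_eq_add_neg, ← neg_mul] using f.isCoprime_num_denom.symm.add_mul_right_right _
  · intro h0
    rw [h0, map_zero, zero_div, eq_comm, sub_eq_zero] at hsub
    exact hE (hEf.trans (adjoin_simple_eq_bot_iff.mpr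
      (hsub ▸ IntermediateField.algebraMap_mem _ c)))
  · rw [hEf, ← inv_div, hsub, adjoin_inv_sub_algebraMap]

theorem exists_isCoprime_eq_aeval_div {K : Type*} [Field K] [Algebra k K] {w x : K}
    (hw : Transcendental k w) (hx : x ∈ k⟮w⟯) :
    ∃ P Q : k[X], IsCoprime P Q ∧ Q ≠ 0 ∧ x = aeval w P / aeval w Q := by
  obtain ⟨F, hF⟩ := (RatFunc.algEquivOfTranscendental w hw).surjective ⟨x, hx⟩
  refine ⟨F.num, F.denom, F.isCoprime_num_denom, F.denom_ne_zero, ?_⟩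
  rw [← RatFunc.algEquivOfTranscendental_apply w hw, hF]

/-- The value at `(u, v)` of the homogenization of a split polynomial `P`, that is
`∑ i, P.coeff i * u ^ i * v ^ (P.natDegree - i)`, in factored form. -/
noncomputable def homogEval (P u v : k[X]) : k[X] :=
  C P.leadingCoeff * (P.roots.map fun α ↦ u - C α * v).prod

theorem sub_C_mul_dvd_homogEval {P : k[X]} {α : k} (hP : P ≠ 0) (hα : P.IsRoot α) (u v : k[X]) :
    u - C α * v ∣ homogEval P u v :=
  (Multiset.dvd_prod (Multiset.mem_map_of_mem _ ((mem_roots hP).mpr hα))).mul_left _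

theorem natDegree_sub_C_mul {u v : k[X]} (hd : v.natDegree < u.natDegree) (α : k) :
    (u - C α * v).natDegree = u.natDegree :=
  natDegree_sub_eq_left_of_natDegree_lt ((natDegree_C_mul_le _ _).trans_lt hd)

theorem zero_notMem_map_sub_C_mul {u v : k[X]} (hd : v.natDegree < u.natDegree)
    (s : Multiset k) : 0 ∉ s.map fun α ↦ u - C α * v := fun h ↦ by
  obtain ⟨α, -, hα⟩ := Multiset.mem_map.mp h
  have := natDegree_sub_C_mul hd α
  rw [hα, natDegree_zero] at this
  exact hd.not_ge (this ▸ Nat.zero_le _)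

theorem homogEval_ne_zero {u v P : k[X]} (hd : v.natDegree < u.natDegree) (hP : P ≠ 0) :
    homogEval P u v ≠ 0 :=
  mul_ne_zero (by simpa using hP) (Multiset.prod_ne_zero (zero_notMem_map_sub_C_mul hd _))

theorem exists_isRoot_of_isRoot_homogEval {u v P : k[X]} {y : k} (hP : P ≠ 0)
    (hy : (homogEval P u v).IsRoot y) : ∃ α, P.IsRoot α ∧ u.eval y = α * v.eval y := by
  rw [IsRoot, homogEval, eval_mul, eval_C, mul_eq_zero,
    or_iff_right (leadingCoeff_ne_zero.mpr hP), eval_multiset_prod, Multiset.prod_eq_zero_iff,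
    Multiset.map_map, Multiset.mem_map] at hy
  obtain ⟨α, hα, h0⟩ := hy
  exact ⟨α, isRoot_of_mem_roots hα, by simpa [sub_eq_zero] using h0⟩

theorem homogEval_C {P u : k[X]} {a : k} : homogEval P u (C a) = (homogEval P X (C a)).comp u := by
  simp [homogEval, multiset_prod_comp]

/-- `h / g = (P / Q) ∘ (u / v)`, where all three fractions are in lowest terms and the first
and the last one have a pole at infinity. -/
structure IsDecomposition (h g P Q u v : k[X]) : Prop where
  isCoprime : IsCoprime u v
  natDegree_lt : v.natDegree < u.natDegree
  ne_zero : Q ≠ 0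
  natDegree_lt' : Q.natDegree < P.natDegree
  associated_num : Associated h (homogEval P u v)
  associated_denom : Associated g (homogEval Q u v * v ^ (P.natDegree - Q.natDegree))

theorem IsDecomposition.dvd_denom {h g P Q u v : k[X]}
    (H : IsDecomposition h g P Q u v) : v ∣ g :=
  ((dvd_pow_self v (Nat.sub_ne_zero_of_lt H.natDegree_lt')).mul_left _).trans
    H.associated_denom.symm.dvd

theorem IsDecomposition.sub_C_mul_dvd_denom {h g P Q u v : k[X]}
    (H : IsDecomposition h g P Q u v) {β : k} (hβ : Q.IsRoot β) :
    u - C β * v ∣ g :=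
  ((sub_C_mul_dvd_homogEval H.ne_zero hβ u v).mul_right _).trans H.associated_denom.symm.dvd

variable [IsAlgClosed k]

theorem natDegree_homogEval {u v : k[X]} (hd : v.natDegree < u.natDegree) (P : k[X]) :
    (homogEval P u v).natDegree = P.natDegree * u.natDegree := by
  rcases eq_or_ne P 0 with rfl | hP
  · simp [homogEval]
  rw [homogEval, natDegree_C_mul (leadingCoeff_ne_zero.mpr hP),
    natDegree_multiset_prod _ (zero_notMem_map_sub_C_mul hd _), Multiset.map_map]
  simp only [Function.comp_def, natDegree_sub_C_mul hd, Multiset.map_const', Multiset.sum_replicate,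
    smul_eq_mul, (IsAlgClosed.splits P).natDegree_eq_card_roots]

theorem algebraMap_homogEval {v : k[X]} (hv : v ≠ 0) (P u : k[X]) :
    algebraMap k[X] (RatFunc k) (homogEval P u v) =
      aeval (algebraMap k[X] (RatFunc k) u / algebraMap k[X] (RatFunc k) v) P *
        algebraMap k[X] (RatFunc k) v ^ P.natDegree := by
  have hv' : algebraMap k[X] (RatFunc k) v ≠ 0 := by simpa using hv
  have hs := IsAlgClosed.splits P
  have hfactor (α : k) : algebraMap k[X] (RatFunc k) (u - C α * v) =
      (algebraMap k[X] (RatFunc k) u / algebraMap k[X] (RatFunc k) v - algebraMap k (RatFunc k) α) *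
        algebraMap k[X] (RatFunc k) v := by
    rw [sub_mul, div_mul_cancel₀ _ hv', map_sub, map_mul, algebraMap_ratFunc_eq]
  rw [(hs.map _).aeval_eq_prod_aroots, aroots, hs.roots_map, homogEval, map_mul,
    map_multiset_prod, Multiset.map_map, Multiset.map_map, ← algebraMap_ratFunc_eq, mul_assoc,
    hs.natDegree_eq_card_roots]
  simp only [Function.comp_def, hfactor, Multiset.prod_map_mul, Multiset.map_const',
    Multiset.prod_replicate]

theorem isCoprime_iff_forall_not_isRoot {a b : k[X]} :
    IsCoprime a b ↔ ∀ y, a.IsRoot y → ¬ b.IsRoot y := by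
  simp only [isCoprime_iff_aeval_ne_zero_of_isAlgClosed k k, coe_aeval_eq_eval, IsRoot,
    ← not_and_or, not_and]

theorem isCoprime_homogEval {u v P Q : k[X]} (huv : IsCoprime u v) (hPQ : IsCoprime P Q)
    (hP : P ≠ 0) (hQ : Q ≠ 0) (j : ℕ) :
    IsCoprime (homogEval P u v) (homogEval Q u v * v ^ j) := by
  rw [isCoprime_iff_forall_not_isRoot] at huv hPQ ⊢
  intro y hPy hy
  obtain ⟨α, hα, huα⟩ := exists_isRoot_of_isRoot_homogEval hP hPy
  have hvy : ¬ v.IsRoot y := fun hv ↦ huv y (by rw [IsRoot, huα, hv.eq_zero, mul_zero]) hv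
  rcases root_mul.mp hy with hQy | hvj
  · obtain ⟨β, hβ, huβ⟩ := exists_isRoot_of_isRoot_homogEval hQ hQy
    exact hPQ α hα (mul_right_cancel₀ hvy (huα.symm.trans huβ) ▸ hβ)
  · exact hvy (eq_zero_of_pow_eq_zero ((eval_pow j).symm.trans hvj))

theorem IsDecomposition.of_mul_eq {h g P Q u v : k[X]} (hc : IsCoprime h g)
    (hg : g.natDegree < h.natDegree) (hPQ : IsCoprime P Q) (hQ : Q ≠ 0) (huv : IsCoprime u v)
    (hd : v.natDegree < u.natDegree)
    (heq : h * (homogEval Q u v * v ^ P.natDegree) = g * (homogEval P u v * v ^ Q.natDegree)) :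
    IsDecomposition h g P Q u v := by
  have hh0 : h ≠ 0 := ne_zero_of_natDegree_gt hg
  have hg0 : g ≠ 0 := ne_zero_of_isCoprime_of_natDegree_lt hc hg
  have hv0 : v ≠ 0 := ne_zero_of_isCoprime_of_natDegree_lt huv hd
  have hHQ := homogEval_ne_zero hd hQ
  have hlhs := mul_ne_zero hh0 (mul_ne_zero hHQ (pow_ne_zero P.natDegree hv0))
  have hHP : homogEval P u v ≠ 0 := left_ne_zero_of_mul (right_ne_zero_of_mul (heq ▸ hlhs))
  have hP : P ≠ 0 := fun h0 ↦ hHP (by simp [homogEval, h0])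
  have hlt : Q.natDegree < P.natDegree := by
    have hdeg := congrArg natDegree heq
    rw [natDegree_mul hh0 (by positivity), natDegree_mul hg0 (by positivity),
      natDegree_mul hHQ (by positivity), natDegree_mul hHP (by positivity), natDegree_pow,
      natDegree_pow, natDegree_homogEval hd, natDegree_homogEval hd] at hdeg
    by_contra! hle
    nlinarith
  have hcop := isCoprime_homogEval huv hPQ hP hQ (P.natDegree - Q.natDegree)
  have hcancel : h * (homogEval Q u v * v ^ (P.natDegree - Q.natDegree)) =
      homogEval P u v * g := by
    apply mul_right_cancel₀ (pow_ne_zero Q.natDegree hv0)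
    rw [mul_assoc, mul_assoc (homogEval Q u v), ← pow_add, Nat.sub_add_cancel hlt.le, heq]
    ring
  exact ⟨huv, hd, hQ, hlt, associated_of_isCoprime_of_mul_eq_mul hc hcop hcancel,
    associated_of_isCoprime_of_mul_eq_mul hc.symm hcop.symm
      (by rw [mul_comm, ← hcancel, mul_comm])⟩

theorem IsDecomposition.of_div_eq {h g P Q u v : k[X]} (hc : IsCoprime h g)
    (hg : g.natDegree < h.natDegree) (hPQ : IsCoprime P Q) (hQ : Q ≠ 0) (huv : IsCoprime u v)
    (hd : v.natDegree < u.natDegree)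
    (heq : algebraMap k[X] (RatFunc k) h / algebraMap k[X] (RatFunc k) g =
      aeval (algebraMap k[X] (RatFunc k) u / algebraMap k[X] (RatFunc k) v) P /
        aeval (algebraMap k[X] (RatFunc k) u / algebraMap k[X] (RatFunc k) v) Q) :
    IsDecomposition h g P Q u v := by
  have hv0 : v ≠ 0 := ne_zero_of_isCoprime_of_natDegree_lt huv hd
  have hg0 : algebraMap k[X] (RatFunc k) g ≠ 0 := by
    simpa using ne_zero_of_isCoprime_of_natDegree_lt hc hg
  have hQw : aeval (algebraMap k[X] (RatFunc k) u / algebraMap k[X] (RatFunc k) v) Q ≠ 0 := by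
    refine left_ne_zero_of_mul (b := algebraMap k[X] (RatFunc k) v ^ Q.natDegree) ?_
    rw [← algebraMap_homogEval hv0]
    simpa using homogEval_ne_zero hd hQ
  refine .of_mul_eq hc hg hPQ hQ huv hd (IsFractionRing.injective k[X] (RatFunc k) ?_)
  simp only [map_mul, map_pow, algebraMap_homogEval hv0]
  rw [div_eq_div_iff hg0 hQw] at heq
  linear_combination (algebraMap k[X] (RatFunc k) v) ^ P.natDegree *
    (algebraMap k[X] (RatFunc k) v) ^ Q.natDegree * heq

namespace IsDecomposition
variable {h g P Q u v : k[X]}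

theorem natDegree_num (H : IsDecomposition h g P Q u v) :
    h.natDegree = P.natDegree * u.natDegree := by
  rw [natDegree_eq_of_associated H.associated_num, natDegree_homogEval H.natDegree_lt]

theorem natDegree_denom (H : IsDecomposition h g P Q u v) : g.natDegree =
    Q.natDegree * u.natDegree + (P.natDegree - Q.natDegree) * v.natDegree := by
  have hv := ne_zero_of_isCoprime_of_natDegree_lt H.isCoprime H.natDegree_lt
  rw [natDegree_eq_of_associated H.associated_denom,
    natDegree_mul (homogEval_ne_zero H.natDegree_lt H.ne_zero) (pow_ne_zero _ hv),
    natDegree_homogEval H.natDegree_lt, natDegree_pow]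

end IsDecomposition

theorem isCoatom_adjoin_div {h g : k[X]} (hc : IsCoprime h g) (hg : g.natDegree < h.natDegree)
    (hh : 1 < h.natDegree)
    (hdec : ∀ {P Q u v}, IsDecomposition h g P Q u v → P.natDegree = 1 ∨ u.natDegree = 1) :
    IsCoatom k⟮algebraMap k[X] (RatFunc k) h / algebraMap k[X] (RatFunc k) g⟯ := by
  have hfin := finrank_adjoin_div hc hg
  set f := algebraMap k[X] (RatFunc k) h / algebraMap k[X] (RatFunc k) g
  refine ⟨fun htop ↦ hh.ne (hfin ▸ finrank_eq_one_iff_eq_top.mpr htop).symm, fun E hE ↦ ?_⟩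
  obtain ⟨u, v, huv, hd, rfl⟩ := exists_eq_adjoin_div (bot_le.trans_lt hE).ne'
  have hfE := hE.le (mem_adjoin_simple_self k f)
  have hfinE := finrank_adjoin_div huv hd
  set w := algebraMap k[X] (RatFunc k) u / algebraMap k[X] (RatFunc k) v
  have hwC : ¬ ∃ c, w = RatFunc.C c := by
    rintro ⟨c, hc⟩
    exact (bot_le.trans_lt hE).ne' (adjoin_simple_eq_bot_iff.mpr
      (hc ▸ IntermediateField.algebraMap_mem _ c))
  obtain ⟨P, Q, hPQ, hQ, hfPQ⟩ :=
    exists_isCoprime_eq_aeval_div (RatFunc.transcendental_of_ne_C w hwC) hfE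
  have hD := IsDecomposition.of_div_eq hc hg hPQ hQ huv hd hfPQ
  rcases hdec hD with hP | hu
  · have : FiniteDimensional k⟮f⟯ (RatFunc k) := Module.finite_of_finrank_pos (by omega)
    refine absurd (eq_of_le_of_finrank_eq' hE.le ?_) hE.ne
    rw [hfin, hfinE, hD.natDegree_num, hP, one_mul]
  · exact finrank_eq_one_iff_eq_top.mp (hfinE.trans hu)

theorem isRoot_of_dvd_X_sub_C_pow {w : k[X]} {c : k} {b : ℕ} (hw : w ∣ (X - C c) ^ b)
    (hdeg : w.natDegree ≠ 0) : w.IsRoot c := by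
  obtain ⟨y, hy⟩ := IsAlgClosed.exists_root w fun h0 ↦ hdeg (natDegree_eq_of_degree_eq_some h0)
  have hyc : ((X - C c) ^ b).eval y = 0 := eval_eq_zero_of_dvd_of_eval_eq_zero hw hy
  rw [eval_pow, eval_sub, eval_X, eval_C] at hyc
  rwa [← sub_eq_zero.mp (eq_zero_of_pow_eq_zero hyc)]

theorem isCoatom_adjoin_div_X_sub_C_pow {h : k[X]} {c : k} {b : ℕ}
    (hc : IsCoprime h ((X - C c) ^ b)) (hb : b < h.natDegree) (hh : 1 < h.natDegree)
    (hcop : b.Coprime h.natDegree) :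
    IsCoatom k⟮algebraMap k[X] (RatFunc k) h / algebraMap k[X] (RatFunc k) ((X - C c) ^ b)⟯ := by
  have hgb : ((X - C c) ^ b).natDegree = b := by rw [natDegree_pow, natDegree_X_sub_C, mul_one]
  refine isCoatom_adjoin_div hc (hgb.trans_lt hb) hh fun {P Q u v} H ↦ ?_
  have hnum := H.natDegree_num
  have hden := H.natDegree_denom
  rw [hgb] at hden
  rcases eq_or_ne Q.natDegree 0 with hQ | hQ
  · rw [hQ, zero_mul, zero_add, tsub_zero] at hden
    exact .inl (Nat.eq_one_of_dvd_coprimes hcop ⟨_, hden⟩ ⟨_, hnum⟩)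
  -- Here `u / v` has `c` as a pole, if it has a finite pole at all, and `Q / 1` has a root `β`;
  -- so `c` would be both a pole and a zero of `u / v - β`.
  obtain ⟨β, hβ⟩ := IsAlgClosed.exists_root Q fun h0 ↦ hQ (natDegree_eq_of_degree_eq_some h0)
  have hroot : (u - C β * v).IsRoot c := isRoot_of_dvd_X_sub_C_pow (H.sub_C_mul_dvd_denom hβ)
    (natDegree_sub_C_mul H.natDegree_lt β ▸ (Nat.zero_le _).trans_lt H.natDegree_lt).ne'
  have hv : v.natDegree = 0 := by
    by_contra hv
    have hvc := isRoot_of_dvd_X_sub_C_pow H.dvd_denom hv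
    refine isCoprime_iff_forall_not_isRoot.mp H.isCoprime c ?_ hvc
    simpa [hvc.eq_zero] using hroot
  rw [hv, mul_zero, add_zero, mul_comm] at hden
  exact .inr (Nat.eq_one_of_dvd_coprimes hcop ⟨_, hden⟩ ⟨_, hnum.trans (mul_comm _ _)⟩)

theorem isCoatom_adjoin_algebraMap {h : k[X]} (hh : 1 < h.natDegree)
    (hdec : ∀ P u : k[X], h = P.comp u → P.natDegree = 1 ∨ u.natDegree = 1) :
    IsCoatom k⟮algebraMap k[X] (RatFunc k) h⟯ := by
  rw [← div_one (algebraMap k[X] (RatFunc k) h), ← map_one (algebraMap k[X] (RatFunc k))]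
  refine isCoatom_adjoin_div isCoprime_one_right (by rw [natDegree_one]; lia) hh
    fun {P Q u v} H ↦ ?_
  obtain ⟨a, rfl⟩ := natDegree_eq_zero.mp (Nat.eq_zero_of_le_zero
    ((natDegree_le_of_dvd H.dvd_denom one_ne_zero).trans_eq natDegree_one))
  obtain ⟨c, hc⟩ := H.associated_num.symm
  obtain ⟨r, hr, hrc⟩ := isUnit_iff.mp c.isUnit
  rw [homogEval_C, ← hrc, mul_comm, ← C_comp, ← mul_comp, eq_comm] at hc
  have hX : (C a : k[X]).natDegree < (X : k[X]).natDegree := by simp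
  simpa [natDegree_C_mul hr.ne_zero, natDegree_homogEval hX] using hdec _ _ hc

end Indecomposability

/-! ### Indecomposability of `X ^ 2 + A(X ^ p)` -/

section Expand
variable {k : Type*} [Field k] {p : ℕ}

theorem natDegree_add_expand {f B : k[X]} (hf : f.natDegree < p) (hB : B.natDegree ≠ 0) :
    (f + expand k p B).natDegree = B.natDegree * p := by
  rw [natDegree_add_eq_right_of_natDegree_lt, natDegree_expand]
  exact (natDegree_expand p B).symm ▸ hf.trans_le (Nat.le_mul_of_pos_left p hB.bot_lt)

theorem natDegree_derivative_comp {B v : k[X]} {c : k} (hc : c ≠ 0) (hv : derivative v = C c * X)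
    (hv0 : v.natDegree ≠ 0) (hB : derivative B ≠ 0) :
    (derivative (B.comp v)).natDegree = (derivative B).natDegree * v.natDegree + 1 := by
  have hcomp : (derivative B).comp v ≠ 0 := by
    rw [Ne, comp_eq_zero_iff, not_or, not_and]
    exact ⟨hB, fun _ hvC ↦ hv0 (hvC ▸ natDegree_C _)⟩
  rw [derivative_comp, hv, mul_assoc, natDegree_C_mul hc, natDegree_X_mul hcomp, natDegree_comp]

variable [CharP k p]

theorem derivative_expand_eq_zero (f : k[X]) : derivative (expand k p f) = 0 := by
  rw [derivative_expand, CharP.cast_eq_zero, zero_mul, mul_zero]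

variable [Fact p.Prime]

theorem exists_eq_add_expand_of_derivative_eq {f g : k[X]} (h : derivative f = derivative g) :
    ∃ B, f = g + expand k p B :=
  ⟨contract p (f - g), by
    rw [expand_contract p (by rw [derivative_sub, h, sub_self]) (NeZero.ne p), add_sub_cancel]⟩

theorem exists_eq_add_expand_of_derivative_comp {P u : k[X]} (h2 : (2 : k) ≠ 0)
    (hu : 2 ≤ u.natDegree) (hPu : derivative (P.comp u) = C 2 * X) :
    ∃ a ≠ 0, ∃ B D, P = C a * X + expand k p B ∧ u = C a⁻¹ * X ^ 2 + expand k p D := by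
  rw [derivative_comp] at hPu
  have hne := hPu.trans_ne (mul_ne_zero (C_ne_zero.mpr h2) X_ne_zero)
  have hdeg := congrArg natDegree hPu
  rw [natDegree_mul (left_ne_zero_of_mul hne) (right_ne_zero_of_mul hne), natDegree_comp,
    natDegree_C_mul_X _ h2] at hdeg
  obtain ⟨a, ha⟩ := natDegree_eq_zero.mp (show (derivative P).natDegree = 0 by nlinarith)
  rw [← ha, C_comp] at hPu hne
  have ha0 : a ≠ 0 := C_ne_zero.mp (right_ne_zero_of_mul hne)
  have hu' : derivative u = C (a⁻¹ * 2) * X := by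
    apply mul_right_cancel₀ (C_ne_zero.mpr ha0)
    rw [hPu, mul_right_comm, ← C_mul, mul_right_comm, inv_mul_cancel₀ ha0, one_mul]
  obtain ⟨B, hB⟩ := exists_eq_add_expand_of_derivative_eq (p := p) (f := P) (g := C a * X)
    (by rw [← ha, derivative_C_mul_X])
  obtain ⟨D, hD⟩ := exists_eq_add_expand_of_derivative_eq (p := p) (f := u) (g := C a⁻¹ * X ^ 2)
    (by rw [hu', derivative_C_mul_X_sq])
  exact ⟨a, ha0, B, D, hB, hD⟩

theorem eq_add_comp_map_frobenius {A B D u : k[X]} {a : k} (ha : a ≠ 0)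
    (hu : u = C a⁻¹ * X ^ 2 + expand k p D)
    (h : X ^ 2 + expand k p A = (C a * X + expand k p B).comp u) :
    A = C a * D + B.comp (u.map (frobenius k p)) := by
  apply expand_injective (NeZero.pos p)
  have hcomp : (expand k p B).comp u = expand k p (B.comp (u.map (frobenius k p))) := by
    rw [expand_eq_comp_X_pow, expand_eq_comp_X_pow, comp_assoc, comp_assoc, X_pow_comp,
      ← expand_eq_comp_X_pow, ← map_expand, map_frobenius_expand]
  have hau : C a * u = X ^ 2 + C a * expand k p D := by
    rw [hu, mul_add, ← mul_assoc, ← C_mul, mul_inv_cancel₀ ha, C_1, one_mul]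
  rw [add_comp, mul_comp, C_comp, X_comp, hcomp, hau] at h
  rw [map_add, map_mul, expand_C]
  linear_combination h

/- If `B` is not constant, then `p` divides the degree of `A = a D + B(v)`. By `hA`, the polynomial
`A'` has large degree, so `B' ≠ 0`, and `p` divides the degree of `A' - a D' = B'(v) v'`; but that
degree is `1` modulo `p`, as `p ∣ deg v` and `deg v' = 1`. -/
theorem natDegree_eq_zero_of_eq_add_comp {A B D v : k[X]} {a c : k} (hp : 2 < p)
    (hA1 : A.coeff 1 ≠ 0)
    (hA : p ∣ A.natDegree → A.natDegree < p ^ 2 * ((derivative A).natDegree + 1) ∧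
      ∀ f : k[X], f.natDegree * p < A.natDegree → p ∣ (derivative A - f).natDegree)
    (ha : a ≠ 0) (hc : c ≠ 0) (hv : derivative v = C c * X)
    (hvD : D.natDegree ≠ 0 → v.natDegree = D.natDegree * p)
    (hABD : A = C a * D + B.comp v) : B.natDegree = 0 := by
  by_contra hB0
  have hA' : derivative A = C a * derivative D + derivative (B.comp v) := by
    rw [hABD, derivative_add, derivative_C_mul]
  have hD0 : D.natDegree ≠ 0 := by
    intro hD
    rw [derivative_of_natDegree_zero hD, derivative_comp, hv, mul_zero, zero_add] at hA'
    apply hA1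
    simpa [coeff_derivative, mul_assoc] using congrArg (coeff · 0) hA'
  have hBD : D.natDegree ≤ B.natDegree * D.natDegree :=
    Nat.le_mul_of_pos_left _ (Nat.pos_of_ne_zero hB0)
  have hdegA : A.natDegree = B.natDegree * D.natDegree * p := by
    rw [hABD, natDegree_add_eq_right_of_natDegree_lt] <;> rw [natDegree_comp, hvD hD0, ← mul_assoc]
    rw [natDegree_C_mul ha]
    nlinarith [hD0.bot_lt]
  obtain ⟨hlt, hdvd⟩ := hA (hdegA ▸ dvd_mul_left p _)
  have hdegD' : (C a * derivative D).natDegree < D.natDegree :=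
    (natDegree_C_mul ha).trans_lt (natDegree_derivative_lt hD0)
  by_cases hB' : derivative B = 0
  · rw [derivative_comp, hB', zero_comp, mul_zero, add_zero] at hA'
    obtain ⟨B, rfl⟩ := exists_eq_add_expand_of_derivative_eq (hB'.trans derivative_zero.symm)
    rw [zero_add, natDegree_expand] at hB0 hdegA
    refine hlt.not_ge ?_
    calc p ^ 2 * ((derivative A).natDegree + 1)
        ≤ p ^ 2 * (B.natDegree * D.natDegree) := Nat.mul_le_mul_left _ <|
          hA' ▸ hdegD'.trans_le (Nat.le_mul_of_pos_left _ (left_ne_zero_of_mul hB0).bot_lt)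
      _ = A.natDegree := by rw [hdegA]; ring
  · have hdvd' := hdvd _ (hdegA ▸ Nat.mul_lt_mul_of_pos_right (hdegD'.trans_le hBD) (NeZero.pos p))
    rw [sub_eq_of_eq_add' hA', natDegree_derivative_comp hc hv (by simp [*, NeZero.ne]) hB',
      hvD hD0, ← mul_assoc, Nat.dvd_add_right (dvd_mul_left p _), Nat.dvd_one] at hdvd'
    lia

theorem natDegree_eq_one_of_X_sq_add_expand_eq_comp {A P u : k[X]} (h2 : (2 : k) ≠ 0)
    (hA1 : A.coeff 1 ≠ 0)
    (hA : p ∣ A.natDegree → A.natDegree < p ^ 2 * ((derivative A).natDegree + 1) ∧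
      ∀ f : k[X], f.natDegree * p < A.natDegree → p ∣ (derivative A - f).natDegree)
    (h : X ^ 2 + expand k p A = P.comp u) : P.natDegree = 1 ∨ u.natDegree = 1 := by
  have hp : 2 < p := by
    refine lt_of_le_of_ne (Fact.out : p.Prime).two_le ?_
    rintro rfl
    exact h2 (mod_cast CharP.cast_eq_zero k 2)
  have hPu : derivative (P.comp u) = C 2 * X := by
    rw [← h, derivative_add, derivative_expand_eq_zero, add_zero, derivative_X_sq]
  rcases lt_or_ge u.natDegree 2 with hu | hu
  · refine .inr (le_antisymm (Nat.le_of_lt_succ hu) (Nat.pos_of_ne_zero fun hu0 ↦ ?_))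
    rw [eq_C_of_natDegree_eq_zero hu0, comp_C, derivative_C] at hPu
    exact mul_ne_zero (C_ne_zero.mpr h2) X_ne_zero hPu.symm
  · obtain ⟨a, ha, B, D, rfl, rfl⟩ := exists_eq_add_expand_of_derivative_comp (p := p) h2 hu hPu
    have hv : derivative ((C a⁻¹ * X ^ 2 + expand k p D).map (frobenius k p)) =
        C (frobenius k p (a⁻¹ * 2)) * X := by
      rw [derivative_map, derivative_add, derivative_C_mul_X_sq, derivative_expand_eq_zero,
        add_zero, Polynomial.map_mul, map_C, map_X]
    have hB : B.natDegree = 0 := by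
      refine natDegree_eq_zero_of_eq_add_comp hp hA1 hA ha ?_ hv (fun hD ↦ ?_)
        (eq_add_comp_map_frobenius ha rfl h)
      · exact (map_ne_zero (frobenius k p)).mpr (mul_ne_zero (inv_ne_zero ha) h2)
      · rw [natDegree_map, natDegree_add_expand (by simpa [ha]) hD]
    rw [eq_C_of_natDegree_eq_zero hB, expand_C, natDegree_add_C, natDegree_C_mul_X a ha]
    exact .inl rfl

end Expand

/-! ### Explicit covers of every degree -/

section Construction
open IntermediateField

variable {k : Type*} [Field k]

theorem rootMultiplicity_eq_of_eq_mul {h w : k[X]} {a : k} {m : ℕ} (hh : h = (X - C a) ^ m * w)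
    (hw : w.eval a ≠ 0) : h.rootMultiplicity a = m := by
  have hw0 : w ≠ 0 := fun h0 ↦ hw (by rw [h0, eval_zero])
  rw [hh, rootMultiplicity_mul (mul_ne_zero (pow_ne_zero _ (X_sub_C_ne_zero a)) hw0),
    rootMultiplicity_X_sub_C_pow, rootMultiplicity_eq_zero hw, add_zero]

theorem wronskian_add_mul_of_derivative_eq_zero {s : k[X]} (hs : derivative s = 0) (g h : k[X]) :
    wronskian g (h + g * s) = wronskian g h := by
  rw [wronskian, wronskian, derivative_add, derivative_mul, hs]
  ring

theorem pow_dvd_wronskian_of_pow_succ_dvd {q h : k[X]} {j : ℕ} (hq : q ^ (j + 1) ∣ h) (g : k[X]) :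
    q ^ j ∣ wronskian g h :=
  dvd_sub ((pow_sub_one_dvd_derivative_of_pow_dvd hq).mul_left _)
    (((pow_dvd_pow q j.le_succ).trans hq).mul_left _)

theorem rootMultiplicity_le_rootMultiplicity_wronskian_add_one {g h : k[X]} {a : k}
    (hW : wronskian g h ≠ 0) :
    h.rootMultiplicity a ≤ (wronskian g h).rootMultiplicity a + 1 := by
  rw [← tsub_le_iff_right, le_rootMultiplicity_iff hW]
  rcases Nat.eq_zero_or_pos (h.rootMultiplicity a) with h0 | h0
  · simp [h0]
  · apply pow_dvd_wronskian_of_pow_succ_dvd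
    rw [Nat.sub_add_cancel h0]
    exact pow_rootMultiplicity_dvd h a

theorem rootMultiplicity_eq_two_of_wronskian {g h : k[X]} {a : k} (hg : ¬ g.IsRoot a)
    (hh : h.IsRoot a) (hW : (wronskian g h).rootMultiplicity a = 1) :
    h.rootMultiplicity a = 2 := by
  have hW0 : wronskian g h ≠ 0 := fun h0 ↦ by simp [h0] at hW
  have h0 : h ≠ 0 := fun h0 ↦ hW0 (by rw [h0, wronskian_zero_right])
  have hle := hW ▸ rootMultiplicity_le_rootMultiplicity_wronskian_add_one (a := a) hW0
  refine le_antisymm hle ?_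
  refine (one_lt_rootMultiplicity_iff_isRoot h0).mpr ⟨hh, ?_⟩
  have hWa : (wronskian g h).IsRoot a := (rootMultiplicity_pos hW0).mp (by lia)
  simpa [wronskian, IsRoot, hh.eq_zero, mt IsRoot.def.mpr hg] using hWa

/-- Some indecomposable rational function of degree `n` defines a tame cover with full inertia
over `0`; adjoining a root of the coordinate to the Galois closure of such a cover produces the
alternating group. -/
def HasPrimitiveTameCover (k : Type*) [Field k] (n : ℕ) : Prop :=
  ∃ (h g : k[X]) (e : ℕ), h.natDegree = n ∧ IsTameCover h g e ∧ HasFullInertia h e ∧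
    IsCoatom k⟮algebraMap k[X] (RatFunc k) h / algebraMap k[X] (RatFunc k) g⟯

theorem hasFullInertia_two_mul {h : k[X]} {a : k} {m : ℕ} (ha : h.rootMultiplicity a = 2)
    (h1 : ∀ y ≠ a, h.IsRoot y → h.rootMultiplicity y = 1 ∨ h.rootMultiplicity y = m)
    (hm : Odd m) : HasFullInertia h (2 * m) := by
  refine .inl ⟨?_, a, ha, fun y hya hy ↦ ?_⟩
  · obtain ⟨r, rfl⟩ := hm
    lia
  · rcases h1 y hya hy with hy | hy <;> rw [hy]
    exacts [odd_one, hm]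

theorem IsTameCover.two_mul {h g : k[X]} {a : k} {m : ℕ} (h2 : (2 : k) ≠ 0) (hh : h.Monic)
    (hhg : IsCoprime h g) (hd : g.degree < h.degree)
    (hW : ∀ y, (wronskian g h).IsRoot y → (h * g).eval y = 0) (ha : h.rootMultiplicity a = 2)
    (h1 : ∀ y ≠ a, h.IsRoot y → h.rootMultiplicity y = 1 ∨ h.rootMultiplicity y = m)
    (hmk : (m : k) ≠ 0) : IsTameCover h g (2 * m) := by
  refine ⟨hh, hhg, hd, hW, ?_, even_two_mul m, fun y hy ↦ ?_⟩
  · rw [Nat.cast_mul, Nat.cast_two]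
    exact mul_ne_zero h2 hmk
  · rcases eq_or_ne y a with rfl | hya
    · exact ha ▸ dvd_mul_right 2 m
    · rcases h1 y hya hy with hy | hy <;> rw [hy]
      exacts [one_dvd _, dvd_mul_left m 2]

theorem hasPrimitiveTameCover_of_wronskian {h g w : k[X]} {m : ℕ} (h2 : (2 : k) ≠ 0)
    (hh : h.Monic) (hhg : IsCoprime h g) (hd : g.degree < h.degree)
    (hf : IsCoatom k⟮algebraMap k[X] (RatFunc k) h / algebraMap k[X] (RatFunc k) g⟯)
    (h0 : h.IsRoot 0) (hW : wronskian g h = X * w) (hw0 : w.eval 0 ≠ 0)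
    (hw : ∀ y, w.IsRoot y → g.IsRoot y ∨ h.rootMultiplicity y = m) (hm : Odd m)
    (hmk : (m : k) ≠ 0) : HasPrimitiveTameCover k h.natDegree := by
  have hW0 : wronskian g h ≠ 0 :=
    hW ▸ mul_ne_zero X_ne_zero fun hw ↦ hw0 (by rw [hw, eval_zero])
  have hg {y : k} (hy : h.IsRoot y) (hgy : g.IsRoot y) : False := by
    obtain ⟨u, v, huv⟩ := hhg
    simpa [hy.eq_zero, hgy.eq_zero] using congrArg (eval y) huv
  have hmult0 : h.rootMultiplicity 0 = 2 :=
    rootMultiplicity_eq_two_of_wronskian (hg h0) h0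
      (rootMultiplicity_eq_of_eq_mul (by rwa [C_0, sub_zero, pow_one]) hw0)
  have hmult : ∀ y ≠ 0, h.IsRoot y → h.rootMultiplicity y = 1 ∨ h.rootMultiplicity y = m := by
    intro y hy0 hy
    by_cases hwy : w.IsRoot y
    · exact .inr ((hw y hwy).resolve_left (hg hy))
    · have hle := rootMultiplicity_le_rootMultiplicity_wronskian_add_one (a := y) hW0
      rw [hW, rootMultiplicity_eq_zero (p := X * w) (by simpa [hy0] using hwy)] at hle
      exact .inl (le_antisymm hle ((rootMultiplicity_pos hh.ne_zero).mpr hy))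
  refine ⟨h, g, 2 * m, rfl, .two_mul h2 hh hhg hd (fun y hy ↦ ?_) hmult0 hmult hmk,
    hasFullInertia_two_mul hmult0 hmult hm, hf⟩
  rw [eval_mul, mul_eq_zero]
  rcases root_mul.mp (hW ▸ hy) with hy | hy
  · exact .inl (by rwa [show y = 0 by simpa using hy])
  · refine (hw y hy).symm.imp_left fun hym ↦ (rootMultiplicity_pos hh.ne_zero).mp ?_
    exact hym ▸ hm.pos

theorem hasPrimitiveTameCover_of_wronskian_X_sub_C_pow [IsAlgClosed k] {h w : k[X]} {c : k}
    {b m : ℕ} (h2 : (2 : k) ≠ 0) (hh : h.Monic) (hc : ¬ h.IsRoot c) (hb0 : b ≠ 0)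
    (hb : b < h.natDegree) (hcop : b.Coprime h.natDegree) (h0 : h.IsRoot 0)
    (hW : wronskian ((X - C c) ^ b) h = X * w)
    (hw0 : w.eval 0 ≠ 0) (hw : ∀ y ≠ c, w.IsRoot y → h.rootMultiplicity y = m) (hm : Odd m)
    (hmk : (m : k) ≠ 0) : HasPrimitiveTameCover k h.natDegree := by
  have hroot (y : k) : ((X - C c) ^ b).IsRoot y ↔ y = c := by simp [hb0, sub_eq_zero]
  have hhg : IsCoprime h ((X - C c) ^ b) :=
    isCoprime_iff_forall_not_isRoot.mpr fun y hy hyc ↦ hc ((hroot y).mp hyc ▸ hy)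
  refine hasPrimitiveTameCover_of_wronskian h2 hh hhg (degree_lt_degree ?_)
    (isCoatom_adjoin_div_X_sub_C_pow hhg hb (by lia) hcop) h0 hW hw0 (fun y hy ↦ ?_) hm hmk
  · rwa [natDegree_pow, natDegree_X_sub_C, mul_one]
  · exact (em (y = c)).imp (hroot y).mpr (hw y · hy)

theorem wronskian_X_sq_mul_X_sub_C_three_mul {q : ℕ} (hq : (q : k) + 3 = 0) :
    wronskian ((X - C (-1)) ^ 1) (X ^ 2 * (X - C 3) * (X - C 2) ^ (q + 1) : k[X]) =
      X * (C 12 * (X - C 2) ^ q) := by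
  have hqX : (q : k[X]) + 3 = 0 := by
    simpa only [map_add, map_natCast, map_ofNat, map_zero] using congrArg C hq
  simp only [wronskian, derivative_mul, derivative_X_pow, derivative_X_sub_C_pow,
    derivative_X_sub_C, Nat.add_sub_cancel]
  simp only [map_natCast, map_ofNat, map_neg, map_one]
  push_cast
  linear_combination (X + 1) * X ^ 2 * (X - 3) * (X - 2) ^ q * hqX

theorem wronskian_X_sq_mul_X_sub_C_neg_one_pow {s : ℕ} (hs : (s : k) + 2 = 0) :
    wronskian ((X - C 1) ^ 1) (X ^ 2 * (X - C (-1)) ^ (s + 1) : k[X]) =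
      X * (C (-2) * (X - C (-1)) ^ s) := by
  have hsX : (s : k[X]) + 2 = 0 := by
    simpa only [map_add, map_natCast, map_ofNat, map_zero] using congrArg C hs
  simp only [wronskian, derivative_mul, derivative_X_pow, derivative_X_sub_C_pow,
    Nat.add_sub_cancel]
  simp only [map_natCast, map_ofNat, map_neg, map_one]
  push_cast
  linear_combination (X - 1) * X ^ 2 * (X + 1) ^ s * hsX

theorem wronskian_X_sub_C_one_pow (N : ℕ) :
    wronskian ((X - C 1) ^ N) (1 - C (N : k) * X) =
      X * (C (N * (N - 1 : k)) * (X - C 1) ^ (N - 1)) := by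
  rcases N with _ | N
  · simp [wronskian]
  simp only [wronskian, derivative_sub, derivative_C_mul_X, derivative_one, derivative_X_sub_C_pow,
    Nat.add_sub_cancel]
  simp only [map_natCast, map_mul, map_sub, map_one]
  push_cast
  ring

theorem dvd_natDegree_X_pow_add_one_sub {p d : ℕ} (hp : 2 ≤ p) (hd : p ∣ d) {f : k[X]}
    (hf : f.natDegree * p < p + d) : p ∣ (X ^ d + 1 - f).natDegree := by
  obtain rfl | hd0 := eq_or_ne d 0
  · have hf0 : f.natDegree = 0 := by
      by_contra hf0
      exact (Nat.le_mul_of_pos_left p (Nat.pos_of_ne_zero hf0)).not_gt (by lia)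
    rw [eq_C_of_natDegree_eq_zero hf0, pow_zero, ← C_1, ← C_add, ← C_sub, natDegree_C]
    exact dvd_zero p
  · have hpd := Nat.le_of_dvd (Nat.pos_of_ne_zero hd0) hd
    have hdeg : (X ^ d + 1 : k[X]).natDegree = d := natDegree_X_pow_add_C
    have hfd : f.natDegree < (X ^ d + 1 : k[X]).natDegree := by
      rw [hdeg]
      nlinarith
    rwa [natDegree_sub_eq_left_of_natDegree_lt hfd, hdeg]

variable [IsAlgClosed k] {p : ℕ} [Fact p.Prime] [CharP k p]

theorem hasPrimitiveTameCover_add_one (h2 : p ≠ 2) (h3 : p ≠ 3) :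
    HasPrimitiveTameCover k (p + 1) := by
  have h2' : (2 : k) ≠ 0 := mod_cast CharP.cast_ne_zero_of_ne_of_prime k Nat.prime_two h2
  have h3' : (3 : k) ≠ 0 := mod_cast CharP.cast_ne_zero_of_ne_of_prime k Nat.prime_three h3
  have h12 : (12 : k) ≠ 0 := by
    rw [show (12 : k) = 2 * 2 * 3 by norm_num]
    exact mul_ne_zero (mul_ne_zero h2' h2') h3'
  have hp : p.Prime := Fact.out
  obtain ⟨q, rfl⟩ := Nat.exists_eq_add_of_le' (show 3 ≤ p by have := hp.two_le; lia)
  set h : k[X] := X ^ 2 * (X - C 3) * (X - C 2) ^ (q + 1) with hh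
  have hmonic : h.Monic :=
    ((monic_X_pow 2).mul (monic_X_sub_C 3)).mul ((monic_X_sub_C 2).pow (q + 1))
  have hdeg : h.natDegree = q + 3 + 1 := by
    rw [hh]
    compute_degree! <;> lia
  rw [← hdeg]
  refine hasPrimitiveTameCover_of_wronskian_X_sub_C_pow (m := q + 1) h2' hmonic ?_ one_ne_zero
    (hdeg ▸ by lia) (Nat.coprime_one_left _) (by simp [hh])
    (wronskian_X_sq_mul_X_sub_C_three_mul (mod_cast CharP.cast_eq_zero k (q + 3))) ?_
    (fun y _ hy ↦ ?_) ?_ ?_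
  · have h4' : (-1 - 3 : k) ≠ 0 := fun h ↦ mul_ne_zero h2' h2' (by linear_combination -h)
    have h3'' : (-1 - 2 : k) ≠ 0 := fun h ↦ h3' (by linear_combination -h)
    simp [hh, h4', h3'']
  · simp [h12, h2']
  · have hy2 : y - 2 = 0 := eq_zero_of_pow_eq_zero (n := q) (by simpa [h12] using hy)
    obtain rfl := sub_eq_zero.mp hy2
    apply rootMultiplicity_eq_of_eq_mul (w := X ^ 2 * (X - C 3))
    · rw [hh, mul_comm]
    · have h23 : (2 - 3 : k) ≠ 0 := by norm_num
      simp [h2', h23]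
  · have := hp.odd_of_ne_two h2
    grind
  · exact (CharP.cast_eq_zero_iff k (q + 3) _).not.mpr
      (Nat.not_dvd_of_pos_of_lt q.succ_pos (by lia))

theorem hasPrimitiveTameCover_four [CharP k 3] : HasPrimitiveTameCover k 4 := by
  have h3 : (3 : k) = 0 := mod_cast CharP.cast_eq_zero k 3
  have hcop : IsCoprime (X ^ 4 : k[X]) ((X - C 1) ^ 1) :=
    isCoprime_iff_forall_not_isRoot.mpr fun y hy hy1 ↦ by simp_all
  have hW : wronskian ((X - C 1) ^ 1) (X ^ 4 : k[X]) = -X ^ 3 := by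
    have h3X : (3 : k[X]) = 0 := mod_cast CharP.cast_eq_zero k[X] 3
    simp only [wronskian, derivative_X_pow, derivative_X_sub_C_pow]
    simp only [map_natCast, map_one]
    push_cast
    linear_combination (X ^ 4 - X ^ 3) * h3X
  refine ⟨X ^ 4, (X - C 1) ^ 1, 4, natDegree_X_pow 4, ⟨monic_X_pow 4, hcop, ?_, fun b hb ↦ ?_,
    fun h4 ↦ ?_, by decide, fun a ha ↦ ?_⟩, .inr ⟨rfl, rfl⟩,
    isCoatom_adjoin_div_X_sub_C_pow hcop (by simp) (by simp) (Nat.coprime_one_left _)⟩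
  · rw [pow_one, degree_X_sub_C, degree_X_pow]
    decide
  · rw [hW] at hb
    obtain rfl : b = 0 := by simpa using hb
    simp
  · exact one_ne_zero (α := k) (by linear_combination h4 - h3)
  · obtain rfl : a = 0 := by simpa using ha
    rw [rootMultiplicity_eq_of_eq_mul (w := 1) (m := 4) (by simp) (by simp)]

theorem hasPrimitiveTameCover_of_eq_add_mul_pow (h2 : p ≠ 2) {h R : k[X]} (hh : h.Monic)
    (hdeg : 1 < h.natDegree)
    (hR : h = X ^ 2 * (X - C (-1)) ^ (2 * p - 1) +
      (X - C 1) ^ 1 * (X * (X - C (-1)) ^ 2 * R) ^ p) :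
    HasPrimitiveTameCover k h.natDegree := by
  have h2' : (2 : k) ≠ 0 := mod_cast CharP.cast_ne_zero_of_ne_of_prime k Nat.prime_two h2
  have hp := (Fact.out : p.Prime).two_le
  obtain ⟨q, rfl⟩ := Nat.exists_eq_add_of_le' (show 3 ≤ p by lia)
  rw [show 2 * (q + 3) - 1 = 2 * q + 4 + 1 by lia] at hR
  have hq : (q : k) + 3 = 0 := mod_cast CharP.cast_eq_zero k (q + 3)
  have hW := wronskian_X_sq_mul_X_sub_C_neg_one_pow (k := k) (s := 2 * q + 4)
    (by push_cast; linear_combination 2 * hq)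
  rw [← wronskian_add_mul_of_derivative_eq_zero (s := (X * (X - C (-1)) ^ 2 * R) ^ (q + 3))
    (by rw [derivative_pow, CharP.cast_eq_zero, C_0, zero_mul, zero_mul]), ← hR] at hW
  refine hasPrimitiveTameCover_of_wronskian_X_sub_C_pow (m := 2 * q + 4 + 1) h2' hh ?_ one_ne_zero
    hdeg (Nat.coprime_one_left _) ?_ hW ?_ (fun y _ hy ↦ ?_) ?_ ?_
  · have h11 : (1 + 1 : k) ≠ 0 := by rwa [one_add_one_eq_two]
    simp [hR, h11]
  · simp [hR]
  · simpa using h2'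
  · have hy1 : y + 1 = 0 := eq_zero_of_pow_eq_zero (n := 2 * q + 4) (by simpa [h2'] using hy)
    obtain rfl := eq_neg_of_add_eq_zero_left hy1
    apply rootMultiplicity_eq_of_eq_mul
      (w := X ^ 2 + (X - C 1) * (X - C (-1)) * (X * R) ^ (q + 3))
    · rw [hR]
      generalize X - C (-1 : k) = Y
      ring
    · simp
  · exact ⟨q + 2, by ring⟩
  · intro hm
    push_cast at hm
    exact one_ne_zero (α := k) (by linear_combination 2 * hq - hm)

theorem hasPrimitiveTameCover_mul_add_one (h2 : p ≠ 2) {i : ℕ} (hi : 2 ≤ i) :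
    HasPrimitiveTameCover k (p * i + 1) := by
  have hp := (Fact.out : p.Prime).two_le
  have hmonic : (X ^ 2 * (X - C (-1)) ^ (2 * p - 1) : k[X]).Monic :=
    (monic_X_pow 2).mul ((monic_X_sub_C _).pow _)
  have hdeg : (X ^ 2 * (X - C (-1)) ^ (2 * p - 1) : k[X]).natDegree = p * 2 + 1 := by
    compute_degree! <;> lia
  obtain rfl | hi := hi.eq_or_lt
  · rw [← hdeg]
    exact hasPrimitiveTameCover_of_eq_add_mul_pow h2 (R := 0) hmonic (by lia)
      (by simp [NeZero.ne])
  · obtain ⟨d, rfl⟩ := Nat.exists_eq_add_of_lt hi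
    set P : k[X] := (X - C 1) ^ 1 * (X * (X - C (-1)) ^ 2 * X ^ d) ^ p with hP
    have hPmonic : P.Monic := ((monic_X_sub_C 1).pow 1).mul <|
      ((monic_X.mul ((monic_X_sub_C _).pow 2)).mul (monic_X_pow d)).pow p
    have hPdeg : P.natDegree = p * (2 + d + 1) + 1 := by
      rw [hP]
      compute_degree! <;> lia
    have hlt : (X ^ 2 * (X - C (-1)) ^ (2 * p - 1) : k[X]).natDegree < P.natDegree := by
      rw [hdeg, hPdeg]
      nlinarith
    rw [← hPdeg, ← natDegree_add_eq_right_of_natDegree_lt hlt]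
    exact hasPrimitiveTameCover_of_eq_add_mul_pow h2
      (hPmonic.add_of_right (degree_lt_degree hlt))
      (by rw [natDegree_add_eq_right_of_natDegree_lt hlt]; lia) rfl

theorem hasPrimitiveTameCover_add (h2 : p ≠ 2) {N : ℕ} (hN : ¬ p ∣ N) (hN1 : ¬ p ∣ N - 1) :
    HasPrimitiveTameCover k (p + N) := by
  have h2' : (2 : k) ≠ 0 := mod_cast CharP.cast_ne_zero_of_ne_of_prime k Nat.prime_two h2
  have hN2 : 2 ≤ N := by
    by_contra! hlt
    interval_cases N <;> simp at hN hN1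
  have hNk : (N : k) ≠ 0 := (CharP.cast_eq_zero_iff k p N).not.mpr hN
  have hN1k : (N - 1 : k) ≠ 0 := by
    rw [← Nat.cast_pred (by lia)]
    exact (CharP.cast_eq_zero_iff k p _).not.mpr hN1
  set f : k[X] := (X - C 1) ^ N * (X ^ p - C ((-1) ^ N)) with hf
  have hfmonic : f.Monic := ((monic_X_sub_C 1).pow N).mul (monic_X_pow_sub_C _ (NeZero.ne p))
  have hfdeg : f.natDegree = p + N := by
    rw [hf, ((monic_X_sub_C 1).pow N).natDegree_mul (monic_X_pow_sub_C _ (NeZero.ne p)),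
      natDegree_pow, natDegree_X_sub_C, natDegree_X_pow_sub_C, mul_one, add_comm]
  have hlt : (1 - C (N : k) * X).natDegree < f.natDegree := by
    have : (1 - C (N : k) * X).natDegree ≤ 1 := by compute_degree
    lia
  have hW := wronskian_X_sub_C_one_pow (k := k) N
  rw [← wronskian_add_mul_of_derivative_eq_zero (s := X ^ p - C ((-1) ^ N))
    (by simp only [derivative_sub, derivative_X_pow, CharP.cast_eq_zero, C_0, zero_mul,
      derivative_C, sub_zero])] at hW
  rw [← hfdeg, ← natDegree_add_eq_right_of_natDegree_lt hlt]
  refine hasPrimitiveTameCover_of_wronskian_X_sub_C_pow (m := 1) h2'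
    (hfmonic.add_of_right (degree_lt_degree hlt)) ?_ (by lia : N ≠ 0) ?_ ?_ ?_ hW ?_ ?_ odd_one
    (by simp)
  · have : (1 - N : k) ≠ 0 := by rwa [← neg_ne_zero, neg_sub]
    simpa [hf, show N ≠ 0 by lia]
  · rw [natDegree_add_eq_right_of_natDegree_lt hlt, hfdeg]
    exact Nat.lt_add_of_pos_left (NeZero.pos p)
  · rw [natDegree_add_eq_right_of_natDegree_lt hlt, hfdeg, Nat.coprime_add_self_right]
    exact ((Nat.Prime.coprime_iff_not_dvd Fact.out).mpr hN).symm
  · simp [hf, NeZero.ne, ← mul_pow]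
  · simp [hNk, hN1k]
  · intro y hy1 hy
    simp [hNk, hN1k, sub_eq_zero, hy1] at hy

theorem hasPrimitiveTameCover_of_expand (h2 : p ≠ 2) {A : k[X]} (hA : A.Monic)
    (hA0 : A.coeff 0 = 0) (hA1 : A.coeff 1 ≠ 0)
    (hpA : p ∣ A.natDegree → A.natDegree < p ^ 2 * ((derivative A).natDegree + 1) ∧
      ∀ f : k[X], f.natDegree * p < A.natDegree → p ∣ (derivative A - f).natDegree) :
    HasPrimitiveTameCover k (p * A.natDegree) := by
  have h2' : (2 : k) ≠ 0 := mod_cast CharP.cast_ne_zero_of_ne_of_prime k Nat.prime_two h2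
  have hp := (Fact.out : p.Prime).two_le
  have hAdeg : A.natDegree ≠ 0 := Nat.one_le_iff_ne_zero.mp (le_natDegree_of_ne_zero hA1)
  have hlt : (X ^ 2 : k[X]).natDegree < p := by
    rw [natDegree_X_pow]
    lia
  have hdeg : (X ^ 2 + expand k p A).natDegree = A.natDegree * p :=
    natDegree_add_expand hlt hAdeg
  have hmonic : (X ^ 2 + expand k p A).Monic := by
    refine ((monic_expand_iff (NeZero.pos p)).mpr hA).add_of_right (degree_lt_degree ?_)
    rw [natDegree_expand]
    exact hlt.trans_le (Nat.le_mul_of_pos_left p (Nat.pos_of_ne_zero hAdeg))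
  have hone : 1 < (X ^ 2 + expand k p A).natDegree := by
    rw [hdeg]
    exact hp.trans (Nat.le_mul_of_pos_left p (Nat.pos_of_ne_zero hAdeg))
  rw [mul_comm, ← hdeg]
  refine hasPrimitiveTameCover_of_wronskian (g := 1) (w := C 2) h2' hmonic isCoprime_one_right
    (degree_lt_degree (by rw [natDegree_one]; lia)) ?_ ?_ ?_ (by simpa) (fun y hy ↦ ?_)
    odd_one (by simp)
  · rw [map_one, div_one]
    exact isCoatom_adjoin_algebraMap hone
      fun P u ↦ natDegree_eq_one_of_X_sq_add_expand_eq_comp h2' hA1 hpA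
  · simp [expand_eval, NeZero.ne, ← coeff_zero_eq_eval_zero, hA0]
  · simp only [wronskian, derivative_add, derivative_X_sq, derivative_expand_eq_zero,
      derivative_one]
    ring
  · simp [h2'] at hy

theorem hasPrimitiveTameCover_mul_of_not_dvd (h2 : p ≠ 2) {j : ℕ} (hj : ¬ p ∣ j) :
    HasPrimitiveTameCover k (p * j) := by
  have hdeg : ((X + C 1) ^ j - C 1 : k[X]).natDegree = j := by
    rw [natDegree_sub_C, natDegree_pow, natDegree_X_add_C, mul_one]
  have hmonic : ((X + C 1) ^ j - C 1 : k[X]).Monic := by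
    refine ((monic_X_add_C 1).pow j).sub_of_left (degree_lt_degree ?_)
    rw [natDegree_C, natDegree_pow, natDegree_X_add_C, mul_one]
    exact Nat.pos_of_ne_zero fun h0 ↦ hj (h0 ▸ dvd_zero p)
  rw [← hdeg]
  refine hasPrimitiveTameCover_of_expand h2 hmonic (by simp [coeff_zero_eq_eval_zero]) ?_
    fun h ↦ (hj (hdeg ▸ h)).elim
  simpa [coeff_X_add_one_pow, coeff_one, CharP.cast_eq_zero_iff k p] using hj

theorem hasPrimitiveTameCover_mul_of_dvd (h2 : p ≠ 2) {d : ℕ} (hd : p ∣ d) :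
    HasPrimitiveTameCover k (p * (p + d)) := by
  have h2' : (2 : k) ≠ 0 := mod_cast CharP.cast_ne_zero_of_ne_of_prime k Nat.prime_two h2
  have hp := (Fact.out : p.Prime).two_le
  set A : k[X] := X ^ (p + d) + (X ^ (d + 1) + X) with hA
  have hdk : (d : k) = 0 := (CharP.cast_eq_zero_iff k p d).mpr hd
  have hlt : (X ^ (d + 1) + X : k[X]).natDegree < (X ^ (p + d) : k[X]).natDegree := by
    have : (X ^ (d + 1) + X : k[X]).natDegree ≤ d + 1 := by compute_degree
    rw [natDegree_X_pow]
    lia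
  have hdeg : A.natDegree = p + d := by
    rw [hA, natDegree_add_eq_left_of_natDegree_lt hlt, natDegree_X_pow]
  have hA' : derivative A = X ^ d + 1 := by
    simp [hA, derivative_X_pow, hdk]
  rw [← hdeg]
  refine hasPrimitiveTameCover_of_expand h2 ((monic_X_pow _).add_of_left (degree_lt_degree hlt))
    ?_ ?_ fun _ ↦ ⟨?_, fun f hf ↦ ?_⟩
  · simp [hA, coeff_zero_eq_eval_zero, NeZero.ne]
  · have hcoeff : A.coeff 1 = (0 : k) ^ d + 1 := by
      simpa [hA', coeff_zero_eq_eval_zero] using (coeff_derivative A 0).symm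
    rw [hcoeff]
    obtain rfl | hd0 := eq_or_ne d 0
    · rwa [pow_zero, one_add_one_eq_two]
    · simp [hd0]
  · rw [hA', ← C_1, natDegree_X_pow_add_C, hdeg]
    have hp2 : p < p ^ 2 := by nlinarith
    nlinarith
  · rw [hA']
    rw [hdeg] at hf
    exact dvd_natDegree_X_pow_add_one_sub hp hd hf

theorem hasPrimitiveTameCover_of_le (h2 : p ≠ 2) {n : ℕ} (hn : p ≤ n) :
    HasPrimitiveTameCover k n := by
  have hp := (Fact.out : p.Prime).two_le
  by_cases h0 : p ∣ n
  · obtain ⟨j, rfl⟩ := h0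
    by_cases hj : p ∣ j
    · have hpj : p ≤ j := Nat.le_of_dvd (by by_contra! hj0; simp_all) hj
      obtain ⟨d, rfl⟩ := Nat.exists_eq_add_of_le hpj
      exact hasPrimitiveTameCover_mul_of_dvd h2 ((Nat.dvd_add_right (dvd_refl p)).mp hj)
    · exact hasPrimitiveTameCover_mul_of_not_dvd h2 hj
  by_cases h1 : p ∣ n - 1
  · obtain ⟨i, hi⟩ := h1
    obtain rfl : n = p * i + 1 := by lia
    obtain rfl | hi1 := eq_or_ne i 1
    · rw [mul_one]
      obtain rfl | h3 := eq_or_ne p 3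
      · exact hasPrimitiveTameCover_four
      · exact hasPrimitiveTameCover_add_one h2 h3
    · have hi0 : i ≠ 0 := by
        rintro rfl
        lia
      exact hasPrimitiveTameCover_mul_add_one h2 (by lia)
  · obtain ⟨N, rfl⟩ := Nat.exists_eq_add_of_le hn
    have hN : ¬ p ∣ N := by simpa using h0
    have hN0 : N ≠ 0 := fun h0 ↦ hN (h0 ▸ dvd_zero p)
    refine hasPrimitiveTameCover_add h2 hN ?_
    rwa [Nat.add_sub_assoc (by lia), Nat.dvd_add_right (dvd_refl p)] at h1

end Construction

theorem HasPrimitiveTameCover.exists_isGalois_forall_ramificationIdx'_eq_one.{u} {k : Type u}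
    [Field k] [IsAlgClosed k] {n : ℕ} [NeZero n] (hk : HasPrimitiveTameCover k n) :
    ∃ (L : Type u) (_ : Field L) (_ : Algebra (RatFunc k) L) (_ : Algebra k[X] L)
      (_ : IsScalarTower k[X] (RatFunc k) L),
      FiniteDimensional (RatFunc k) L ∧ IsGalois (RatFunc k) L ∧
      Nonempty (Gal(L/RatFunc k) ≃* alternatingGroup (Fin n)) ∧
      ∀ P : Ideal k[X], P.IsPrime → P ≠ ⊥ → ∀ Q : Ideal (integralClosure k[X] L), Q.IsPrime →
        Q.comap (algebraMap k[X] (integralClosure k[X] L)) = P → P.ramificationIdx' Q = 1 := by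
  obtain ⟨h, g, e, hn, H, hh, hf⟩ := hk
  let F := h.map (algebraMap k (RatFunc k)) - C (RatFunc.X ^ e) * g.map (algebraMap k (RatFunc k))
  let L := F.SplittingField
  obtain ⟨r, hL⟩ := exists_isKummerGaloisClosure (L := L) H.monic H.degree_lt hn e
  obtain ⟨_, _⟩ := hL.finiteDimensional_isGalois H (map_pow (algebraMap (RatFunc k) L) RatFunc.X e)
  have : IsScalarTower k k[X] L := .to₁₂₄ k k[X] (RatFunc k) L
  have hX : algebraMap k[X] L X = algebraMap (RatFunc k) L RatFunc.X := by
    rw [IsScalarTower.algebraMap_apply k[X] (RatFunc k) L, RatFunc.algebraMap_X]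
  have hLX : IsKummerGaloisClosure h g e (algebraMap k[X] L X) r := hX ▸ hL
  refine ⟨L, inferInstance, inferInstance, inferInstance, inferInstance, inferInstance,
    inferInstance, hLX.nonempty_mulEquiv_alternatingGroup hn hX.symm H
      (hLX.range_monodromy_eq_top hn H hf hh),
    fun P _ hP Q _ hQP ↦ hLX.ramificationIdx'_eq_one H hP hQP⟩

/-- Abhyankar's alternating group conjecture for odd `p` (proved): for an odd
prime `p`, an integer `n ≥ p`, and an algebraically closed field `k` of
characteristic `p`, there is a finite Galois extension `L` of `k(X)` with
Galois group isomorphic to the alternating group `A_n`, in which every nonzero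
prime ideal of `k[X]` is unramified: for every nonzero prime `P` of `k[X]` and
every prime `Q` of the integral closure of `k[X]` in `L` lying over `P`, the
ramification index of `Q` over `P` is `1`. -/
theorem stmt_19 (p : ℕ) (hp : p.Prime) (hodd : Odd p)
    (n : ℕ) (hn : p ≤ n)
    (k : Type) [Field k] [IsAlgClosed k] [CharP k p] :
    ∃ (L : Type) (_ : Field L) (_ : Algebra (RatFunc k) L)
      (_ : Algebra (Polynomial k) L)
      (_ : IsScalarTower (Polynomial k) (RatFunc k) L),
      FiniteDimensional (RatFunc k) L ∧ IsGalois (RatFunc k) L ∧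
      Nonempty ((L ≃ₐ[RatFunc k] L) ≃* alternatingGroup (Fin n)) ∧
      ∀ P : Ideal (Polynomial k), P.IsPrime → P ≠ ⊥ →
        ∀ Q : Ideal (integralClosure (Polynomial k) L), Q.IsPrime →
          Q.comap (algebraMap (Polynomial k) (integralClosure (Polynomial k) L)) = P →
          Ideal.ramificationIdx' P Q = 1 := by
  have : Fact p.Prime := ⟨hp⟩
  have : NeZero n := ⟨(hp.pos.trans_le hn).ne'⟩
  have h2 : p ≠ 2 := by
    rintro rfl
    exact absurd hodd (by decide)
  exact (hasPrimitiveTameCover_of_le h2 hn).exists_isGalois_forall_ramificationIdx'_eq_one
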